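/- arXiv:1510.04193 — 3 statements merged into one kernel-verified Lean document; each statement's English description precedes it below -/
import Mathlib

section
/- Let X be a Polish space with a Borel measure μ such that μ({x}) = 0 for every x ∈ X, and let ν be a Borel measure on the Cantor space 2^ℕ such that ν({z}) = 0 for every z ∈ 2^ℕ and ν(U) > 0 for every nonempty open U ⊆ 2^ℕ. Assume there is a Borel set Y ⊆ X with ν(2^ℕ) < μ(Y) < ∞. Then there exists a continuous injective map H : 2^ℕ → X that preserves the measure, i.e. μ(H(A)) = ν(A) for every Borel set A ⊆ 2^ℕ. -/
open MeasureTheory Set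

/-!
All that matters about `Z = 2^ℕ` is that it is compact, metrizable and totally disconnected.
Approximate the embedding by locally constant assignments `z ↦ L z ⊆ Y` whose distinct values are
disjoint measurable sets and such that every fiber of `L` has smaller `ν`-measure than the
corresponding value has `μ`-measure. Since neither measure has atoms, such a packing can be refined:
splitting a fiber in two, one can split the value accordingly, and splitting a value in two, one can
split the fiber accordingly. Refining countably often, the values become compact and shrink to
points `H z`, different points of `Z` get disjoint values, and the total `μ`-measure of the values
tends to `ν Z`. The strict inequalities give `ν F ≤ μ (H '' F)` for closed `F`, and comparing total
masses turns this into equality of measures.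
-/

open scoped ENNReal NNReal Topology
open Filter Metric TopologicalSpace

section MeasureOfSubsets

variable {α : Type*} [MeasurableSpace α] {μ : Measure α} {C : Set α} {a b δ : ℝ≥0∞}

theorem exists_subset_measure_inter_sUnion_mem_Ioc {S : Set (Set α)} (hS : S.Finite)
    (hSδ : ∀ U ∈ S, μ U ≤ δ) (ha : a < μ (C ∩ ⋃₀ S)) :
    ∃ T ⊆ S, μ (C ∩ ⋃₀ T) ∈ Ioc a (a + δ) := by
  induction S, hS using Set.Finite.induction_on with
  | empty => simp at ha
  | @insert U S _ _ ih =>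
    rw [forall_mem_insert] at hSδ
    by_cases haS : a < μ (C ∩ ⋃₀ S)
    · obtain ⟨T, hTS, hT⟩ := ih hSδ.2 haS
      exact ⟨T, hTS.trans (subset_insert U S), hT⟩
    · refine ⟨insert U S, Subset.rfl, ha, ?_⟩
      calc
        μ (C ∩ ⋃₀ insert U S) ≤ μ (C ∩ ⋃₀ S) + μ (C ∩ U) := by
          rw [sUnion_insert, union_comm, inter_union_distrib_left]
          exact measure_union_le _ _
        _ ≤ a + δ := add_le_add (not_lt.1 haS) ((measure_mono inter_subset_right).trans hSδ.1)

theorem measure_le_of_forall_isClosed [TopologicalSpace α] [IsFiniteMeasure μ] [μ.WeaklyRegular]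
    {κ : Measure α} (h : ∀ F, IsClosed F → μ F ≤ κ F) : μ ≤ κ := by
  refine Measure.le_iff.2 fun A hA ↦ le_of_forall_lt fun r hr ↦ ?_
  obtain ⟨F, hFA, hF, hrF⟩ := hA.exists_lt_isClosed_of_ne_top (measure_ne_top μ A) hr
  exact hrF.trans_le ((h F hF).trans (measure_mono hFA))

variable [TopologicalSpace α] [NullSingletonClass μ]

theorem exists_finite_measure_inter_sUnion_mem_Ioo [μ.OuterRegular]
    {B : Set (Set α)} (hB : IsTopologicalBasis B) (hC : IsCompact C) (ha : a < μ C) (hab : a < b) :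
    ∃ S ⊆ B, S.Finite ∧ μ (C ∩ ⋃₀ S) ∈ Ioo a b := by
  obtain ⟨δ, hδ, hδb⟩ := ENNReal.lt_iff_exists_add_pos_lt.1 hab
  have small_cover : C ⊆ ⋃ V ∈ {V ∈ B | μ V ≤ δ}, id V := fun x _ ↦ by
    obtain ⟨U, hxU, hU, hUδ⟩ := Set.exists_isOpen_lt_of_lt (μ := μ) {x} δ (by simpa using hδ)
    obtain ⟨V, hV, hxV, hVU⟩ := hB.exists_subset_of_mem_open (hxU rfl) hU
    exact mem_biUnion (⟨hV, (measure_mono hVU).trans hUδ.le⟩ : V ∈ {V ∈ B | μ V ≤ δ}) hxV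
  obtain ⟨S, hSB, hS, hCS⟩ := hC.elim_finite_subcover_image (fun V hV ↦ hB.isOpen hV.1) small_cover
  replace hCS : C ⊆ ⋃₀ S := sUnion_eq_biUnion ▸ hCS
  obtain ⟨T, hTS, hT⟩ := exists_subset_measure_inter_sUnion_mem_Ioc hS
    (fun V hV ↦ (hSB hV).2) (by rwa [inter_eq_left.2 hCS])
  exact ⟨T, fun V hV ↦ (hSB (hTS hV)).1, hS.subset hTS, hT.1, hT.2.trans_lt hδb⟩

theorem exists_isClopen_subset_measure_mem_Ioo [CompactSpace α] [T2Space α]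
    [TotallyDisconnectedSpace α] [μ.OuterRegular] (hC : IsClopen C) (ha : a < μ C)
    (hab : a < b) : ∃ D ⊆ C, IsClopen D ∧ μ D ∈ Ioo a b := by
  obtain ⟨S, hSB, hS, hCS⟩ := exists_finite_measure_inter_sUnion_mem_Ioo
    isTopologicalBasis_isClopen hC.isClosed.isCompact ha hab
  refine ⟨C ∩ ⋃₀ S, inter_subset_left, hC.inter ?_, hCS⟩
  exact sUnion_eq_biUnion ▸ hS.isClopen_biUnion fun V hV ↦ hSB hV

theorem exists_isClopen_measure_inter_lt_measure_sdiff_lt [CompactSpace α] [T2Space α]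
    [TotallyDisconnectedSpace α] [OpensMeasurableSpace α] [IsFiniteMeasure μ] [μ.OuterRegular]
    (hC : IsClopen C) (hab : μ C < a + b) :
    ∃ D, IsClopen D ∧ ((C ∩ D).Nonempty → μ (C ∩ D) < a) ∧ ((C \ D).Nonempty → μ (C \ D) < b) := by
  by_cases hCb : μ C < b
  · exact ⟨∅, isClopen_empty, by simp, by simp [hCb]⟩
  by_cases hCa : μ C < a
  · exact ⟨univ, isClopen_univ, by simp [hCa], by simp⟩
  rw [not_lt] at hCa hCb
  have hb : b ≠ ∞ := (hCb.trans_lt (measure_lt_top μ C)).ne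
  have hsub : μ C - b < a := ENNReal.sub_lt_of_lt_add hCb hab
  obtain ⟨D, hDC, hD, hbD, hDa⟩ :=
    exists_isClopen_subset_measure_mem_Ioo hC (hsub.trans_le hCa) hsub
  refine ⟨D, hD, fun _ ↦ by rwa [inter_eq_right.2 hDC], fun _ ↦ ?_⟩
  rw [measure_sdiff hDC hD.isOpen.measurableSet.nullMeasurableSet (measure_ne_top μ D)]
  refine ENNReal.sub_lt_of_lt_add (measure_mono hDC) ?_
  rwa [add_comm, ← ENNReal.sub_lt_iff_lt_right hb hCb]

theorem exists_isCompact_subset_measure_mem_Ioo [BorelSpace α] [T2Space α] [IsFiniteMeasure μ]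
    [μ.InnerRegularCompactLTTop] {M : Set α} (hM : MeasurableSet M) (ha : a < μ M) (hab : a < b) :
    ∃ K ⊆ M, IsCompact K ∧ μ K ∈ Ioo a b := by
  obtain ⟨K₀, hKM, hK₀, haK⟩ := hM.exists_lt_isCompact_of_ne_top (measure_ne_top μ M) ha
  obtain ⟨S, hSo, -, haS, hSb⟩ := exists_finite_measure_inter_sUnion_mem_Ioo
    isTopologicalBasis_opens hK₀ haK hab
  obtain ⟨K, hK, hKc, haK⟩ := MeasurableSet.exists_lt_isCompact_of_ne_top
    (hK₀.measurableSet.inter (isOpen_sUnion hSo).measurableSet) (measure_ne_top μ _) haS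
  exact ⟨K, hK.trans (inter_subset_left.trans hKM), hKc, haK, (measure_mono hK).trans_lt hSb⟩

theorem exists_isCompact_subset_lt_measure_lt_measure_sdiff [BorelSpace α] [T2Space α]
    [IsFiniteMeasure μ] [μ.InnerRegularCompactLTTop] {M : Set α} (hM : MeasurableSet M)
    (hab : a + b < μ M) : ∃ K ⊆ M, IsCompact K ∧ a < μ K ∧ b < μ (M \ K) := by
  obtain ⟨K, hKM, hK, haK, hKb⟩ := exists_isCompact_subset_measure_mem_Ioo hM
    (le_self_add.trans_lt hab) (lt_tsub_iff_right.2 hab)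
  refine ⟨K, hKM, hK, haK, ?_⟩
  rw [measure_sdiff hKM hK.measurableSet.nullMeasurableSet (measure_ne_top μ K)]
  exact lt_tsub_iff_left.2 (lt_tsub_iff_right.1 hKb)

end MeasureOfSubsets

theorem isLocallyConstant_mem_comp {Z β : Type*} [TopologicalSpace Z] {f : Z → β}
    {D : β → Set Z} (hf : IsLocallyConstant f) (hD : ∀ z, IsClopen (D (f z))) :
    IsLocallyConstant fun z ↦ z ∈ D (f z) := by
  refine (IsLocallyConstant.iff_eventually_eq _).2 fun z ↦ ?_
  by_cases hz : z ∈ D (f z)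
  · filter_upwards [hf.eventually_eq z, (hD z).isOpen.mem_nhds hz] with w hwz hw
    simp only [hwz, hw, hz]
  · filter_upwards [hf.eventually_eq z, (hD z).compl.isOpen.mem_nhds hz] with w hwz hw
    exact propext (iff_of_false (hwz ▸ hw) hz)

/-- A clopen partition of `Z`, given by the fibers of `L`, together with an assignment of
pairwise disjoint measurable sets to its cells, each strictly larger for `μ` than its cell is for
`ν`. Since the values are nonempty and pairwise disjoint, `L` records both the partition and the
assignment. -/
structure IsPacking {X Z : Type*} [MeasurableSpace X] [TopologicalSpace Z] [MeasurableSpace Z]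
    (μ : Measure X) (ν : Measure Z) (L : Z → Set X) : Prop where
  isLocallyConstant : IsLocallyConstant L
  measurableSet : ∀ z, MeasurableSet (L z)
  disjoint : ∀ w z, L w ≠ L z → Disjoint (L w) (L z)
  lt_measure : ∀ z, ν (L ⁻¹' {L z}) < μ (L z)

namespace IsPacking

variable {X Z : Type*} [MeasurableSpace X] [TopologicalSpace Z] [MeasurableSpace Z]
  {μ : Measure X} {ν : Measure Z} {L L' : Z → Set X}

theorem const {M : Set X} (hM : MeasurableSet M) (hνM : ν univ < μ M) :
    IsPacking μ ν (fun _ ↦ M) where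
  isLocallyConstant := IsLocallyConstant.const M
  measurableSet _ := hM
  disjoint _ _ h := (h rfl).elim
  lt_measure _ := by simpa

theorem nonempty (h : IsPacking μ ν L) (z : Z) : (L z).Nonempty :=
  nonempty_of_measure_ne_zero (h.lt_measure z).ne_bot

theorem of_subset (h : IsPacking μ ν L) (hL' : IsLocallyConstant L')
    (hmeas : ∀ z, MeasurableSet (L' z)) (hsub : ∀ z, L' z ⊆ L z)
    (hdisj : ∀ w z, L w = L z → L' w ≠ L' z → Disjoint (L' w) (L' z))
    (hlt : ∀ z, ν (L ⁻¹' {L z} ∩ L' ⁻¹' {L' z}) < μ (L' z)) : IsPacking μ ν L' where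
  isLocallyConstant := hL'
  measurableSet := hmeas
  disjoint w z hne := by
    by_cases hwz : L w = L z
    · exact hdisj w z hwz hne
    · exact (h.disjoint w z hwz).mono (hsub w) (hsub z)
  lt_measure z := by
    have fiber_subset : L' ⁻¹' {L' z} ⊆ L ⁻¹' {L z} := fun w (hw : L' w = L' z) ↦ by
      by_contra hne
      obtain ⟨x, hx⟩ := nonempty_of_measure_ne_zero (hlt z).ne_bot
      exact disjoint_left.1 (h.disjoint w z hne) (hsub w (hw ▸ hx)) (hsub z hx)
    simpa only [inter_eq_right.2 fiber_subset] using hlt z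

theorem comp (h : IsPacking μ ν L) {K : Set X → Set X} (hmeas : ∀ z, MeasurableSet (K (L z)))
    (hsub : ∀ z, K (L z) ⊆ L z) (hlt : ∀ z, ν (L ⁻¹' {L z}) < μ (K (L z))) :
    IsPacking μ ν (fun z ↦ K (L z)) :=
  h.of_subset (h.isLocallyConstant.comp K) hmeas hsub (fun _ _ hwz hne ↦ (hne (hwz ▸ rfl)).elim)
    fun z ↦ (measure_mono inter_subset_left).trans_lt (hlt z)

theorem exists_split (h : IsPacking μ ν L) {D : Set X → Set Z} {S : Set X → Set X}
    (hD : ∀ z, IsClopen (D (L z))) (hS : ∀ z, MeasurableSet (S (L z)))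
    (hin : ∀ z ∈ D (L z), ν (L ⁻¹' {L z} ∩ D (L z)) < μ (L z ∩ S (L z)))
    (hout : ∀ z ∉ D (L z), ν (L ⁻¹' {L z} \ D (L z)) < μ (L z \ S (L z))) :
    ∃ L', IsPacking μ ν L' ∧ (∀ z, L' z ⊆ L z) ∧ (∀ z ∈ D (L z), L' z = L z ∩ S (L z)) ∧
      ∀ z ∉ D (L z), L' z = L z \ S (L z) := by
  let L' (z : Z) : Set X := {x ∈ L z | x ∈ S (L z) ↔ z ∈ D (L z)}
  have L'_in (z : Z) (hz : z ∈ D (L z)) : L' z = L z ∩ S (L z) := by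
    ext x; simp [L', hz]
  have L'_out (z : Z) (hz : z ∉ D (L z)) : L' z = L z \ S (L z) := by
    ext x; simp [L', hz]
  have locallyConstant : IsLocallyConstant L' :=
    (h.isLocallyConstant.prodMk (isLocallyConstant_mem_comp h.isLocallyConstant hD)).comp
      fun p ↦ {x ∈ p.1 | x ∈ S p.1 ↔ p.2}
  have measurable (z : Z) : MeasurableSet (L' z) := by
    by_cases hz : z ∈ D (L z)
    · exact L'_in z hz ▸ (h.measurableSet z).inter (hS z)
    · exact L'_out z hz ▸ (h.measurableSet z).diff (hS z)
  have lt_measure (z : Z) : ν {w | L w = L z ∧ (w ∈ D (L z) ↔ z ∈ D (L z))} < μ (L' z) := by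
    by_cases hz : z ∈ D (L z)
    · simpa only [L'_in z hz, hz, iff_true] using! hin z hz
    · simpa only [L'_out z hz, hz, iff_false] using! hout z hz
  have mem_iff {w z : Z} {x : X} (hwz : L w = L z) (hw : x ∈ L' w) (hz : x ∈ L' z) :
      w ∈ D (L z) ↔ z ∈ D (L z) := by
    rw [← hz.2, ← hwz, hw.2]
  have L'_subset (z : Z) : L' z ⊆ L z := sep_subset _ _
  refine ⟨L', h.of_subset locallyConstant measurable L'_subset
    (fun w z hwz hne ↦ ?_) (fun z ↦ ?_), L'_subset, L'_in, L'_out⟩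
  · refine disjoint_left.2 fun x hw hz ↦ hne ?_
    simp only [L', hwz, mem_iff hwz hw hz]
  · obtain ⟨x, hx⟩ := nonempty_of_measure_ne_zero (lt_measure z).ne_bot
    have fiber_subset : L ⁻¹' {L z} ∩ L' ⁻¹' {L' z} ⊆
        {w | L w = L z ∧ (w ∈ D (L z) ↔ z ∈ D (L z))} := fun w hw ↦
      ⟨hw.1, mem_iff hw.1 ((hw.2 : L' w = L' z) ▸ hx) hx⟩
    exact (measure_mono fiber_subset).trans_lt (lt_measure z)

theorem measure_le_measure_biUnion [CompactSpace Z] [OpensMeasurableSpace Z]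
    (h : IsPacking μ ν L) (A : Set Z) : ν A ≤ μ (⋃ z ∈ A, L z) := by
  have countable_image : (L '' A).Countable :=
    (h.isLocallyConstant.range_finite.subset (image_subset_range L A)).countable
  calc
    ν A ≤ ν (L ⁻¹' (L '' A)) := measure_mono (subset_preimage_image L A)
    _ = ∑' M : L '' A, ν (L ⁻¹' {↑M}) :=
      (tsum_measure_preimage_singleton countable_image
        fun M _ ↦ (h.isLocallyConstant {M}).measurableSet).symm
    _ ≤ ∑' M : L '' A, μ M :=
      ENNReal.tsum_le_tsum <| by rintro ⟨_, z, -, rfl⟩; exact (h.lt_measure z).le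
    _ = μ (⋃ M ∈ L '' A, M) := by
      refine (measure_biUnion (f := fun M ↦ M) countable_image ?_ ?_).symm
      · rintro _ ⟨w, -, rfl⟩ _ ⟨z, -, rfl⟩ hne
        exact h.disjoint w z hne
      · rintro _ ⟨z, -, rfl⟩
        exact h.measurableSet z
    _ = μ (⋃ z ∈ A, L z) := by rw [biUnion_image]

section Compact

variable [TopologicalSpace X] [BorelSpace X] [T2Space X] [IsFiniteMeasure μ]
  [μ.InnerRegularCompactLTTop] [NullSingletonClass μ] [OpensMeasurableSpace Z]

theorem exists_refinement_separating (h : IsPacking μ ν L) {E : Set Z} (hE : IsClopen E) :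
    ∃ L', IsPacking μ ν L' ∧ (∀ z, L' z ⊆ L z) ∧ ∀ w ∈ E, ∀ z ∉ E, Disjoint (L' w) (L' z) := by
  have exists_split_value : ∀ M ∈ range L, ∃ S, MeasurableSet S ∧
      ν (L ⁻¹' {M} ∩ E) < μ (M ∩ S) ∧ ν (L ⁻¹' {M} \ E) < μ (M \ S) := by
    rintro _ ⟨z, rfl⟩
    obtain ⟨S, hSL, hS, hin, hout⟩ := exists_isCompact_subset_lt_measure_lt_measure_sdiff
      (h.measurableSet z)
      ((measure_inter_add_sdiff _ hE.isOpen.measurableSet).trans_lt (h.lt_measure z))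
    exact ⟨S, hS.measurableSet, by rwa [inter_eq_right.2 hSL], hout⟩
  choose! S hS hin hout using exists_split_value
  obtain ⟨L', hL', L'_subset, L'_in, L'_out⟩ := h.exists_split (D := fun _ ↦ E) (S := S)
    (fun _ ↦ hE) (fun z ↦ hS _ ⟨z, rfl⟩) (fun z _ ↦ hin _ ⟨z, rfl⟩) (fun z _ ↦ hout _ ⟨z, rfl⟩)
  refine ⟨L', hL', L'_subset, fun w hw z hz ↦ ?_⟩
  by_cases hwz : L w = L z
  · rw [L'_in w hw, L'_out z hz, hwz]
    exact disjoint_sdiff_inter.symm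
  · exact (h.disjoint w z hwz).mono (L'_subset w) (L'_subset z)

theorem exists_isCompact_refinement [CompactSpace Z] (h : IsPacking μ ν L) {ε : ℝ≥0∞}
    (hε : ε ≠ 0) : ∃ L', IsPacking μ ν L' ∧ (∀ z, L' z ⊆ L z) ∧ (∀ z, IsCompact (L' z)) ∧
      μ (⋃ z, L' z) ≤ ν univ + ε := by
  have : Countable (range L) := h.isLocallyConstant.range_finite.countable
  obtain ⟨e, he, heε⟩ := ENNReal.exists_pos_sum_of_countable' hε (range L)
  have exists_compact_value : ∀ M, ∀ hM : M ∈ range L, ∃ K ⊆ M, IsCompact K ∧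
      ν (L ⁻¹' {M}) < μ K ∧ μ K < ν (L ⁻¹' {M}) + e ⟨M, hM⟩ := by
    rintro _ ⟨z, rfl⟩
    exact exists_isCompact_subset_measure_mem_Ioo (h.measurableSet z) (h.lt_measure z)
      (ENNReal.lt_add_right ((h.lt_measure z).trans_le le_top).ne (he _).ne')
  choose! K hKM hK hνK hKν using exists_compact_value
  refine ⟨fun z ↦ K (L z), h.comp (fun z ↦ (hK _ ⟨z, rfl⟩).measurableSet) (fun z ↦ hKM _ ⟨z, rfl⟩)
    fun z ↦ hνK _ ⟨z, rfl⟩, fun z ↦ hKM _ ⟨z, rfl⟩, fun z ↦ hK _ ⟨z, rfl⟩, ?_⟩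
  calc
    μ (⋃ z, K (L z)) = μ (⋃ M : range L, K M) := by rw [iUnion_subtype, biUnion_range]
    _ ≤ ∑' M : range L, μ (K M) := measure_iUnion_le _
    _ ≤ ∑' M : range L, (ν (L ⁻¹' {↑M}) + e M) :=
      ENNReal.tsum_le_tsum fun M ↦ (hKν M M.2).le
    _ = ν univ + ∑' M, e M := by
      rw [ENNReal.tsum_add, tsum_measure_preimage_singleton (to_countable (range L))
        fun M _ ↦ (h.isLocallyConstant {M}).measurableSet, preimage_range]
    _ ≤ ν univ + ε := by gcongr

end Compact

section Fine

variable [OpensMeasurableSpace Z] [CompactSpace Z] [T2Space Z] [TotallyDisconnectedSpace Z]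
  [NullSingletonClass ν] [IsFiniteMeasure ν] [ν.OuterRegular]

theorem exists_refinement_subset_or_disjoint (h : IsPacking μ ν L) {B : Set X}
    (hB : MeasurableSet B) :
    ∃ L', IsPacking μ ν L' ∧ (∀ z, L' z ⊆ L z) ∧ ∀ z, L' z ⊆ B ∨ Disjoint (L' z) B := by
  have exists_split_fiber : ∀ M ∈ range L, ∃ D, IsClopen D ∧
      ((L ⁻¹' {M} ∩ D).Nonempty → ν (L ⁻¹' {M} ∩ D) < μ (M ∩ B)) ∧
      ((L ⁻¹' {M} \ D).Nonempty → ν (L ⁻¹' {M} \ D) < μ (M \ B)) := by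
    rintro _ ⟨z, rfl⟩
    exact exists_isClopen_measure_inter_lt_measure_sdiff_lt (h.isLocallyConstant.isClopen_fiber _)
      ((h.lt_measure z).trans_eq (measure_inter_add_sdiff _ hB).symm)
  choose! D hD hin hout using exists_split_fiber
  obtain ⟨L', hL', L'_subset, L'_in, L'_out⟩ := h.exists_split (S := fun _ ↦ B)
    (fun z ↦ hD _ ⟨z, rfl⟩) (fun _ ↦ hB) (fun z hz ↦ hin _ ⟨z, rfl⟩ ⟨z, rfl, hz⟩)
    fun z hz ↦ hout _ ⟨z, rfl⟩ ⟨z, rfl, hz⟩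
  refine ⟨L', hL', L'_subset, fun z ↦ ?_⟩
  by_cases hz : z ∈ D (L z)
  · exact .inl (L'_in z hz ▸ inter_subset_right)
  · exact .inr (L'_out z hz ▸ disjoint_sdiff_left)

theorem exists_refinement_forall_subset_or_disjoint (h : IsPacking μ ν L) {S : Set (Set X)}
    (hS : S.Finite) (hSm : ∀ B ∈ S, MeasurableSet B) :
    ∃ L', IsPacking μ ν L' ∧ (∀ z, L' z ⊆ L z) ∧ ∀ z, ∀ B ∈ S, L' z ⊆ B ∨ Disjoint (L' z) B := by
  induction S, hS using Set.Finite.induction_on with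
  | empty => exact ⟨L, h, fun _ ↦ Subset.rfl, by simp⟩
  | @insert B S _ _ ih =>
    rw [forall_mem_insert] at hSm
    obtain ⟨L₁, hL₁, hL₁L, hL₁S⟩ := ih hSm.2
    obtain ⟨L₂, hL₂, hL₂L₁, hL₂B⟩ := hL₁.exists_refinement_subset_or_disjoint hSm.1
    refine ⟨L₂, hL₂, fun z ↦ (hL₂L₁ z).trans (hL₁L z), fun z ↦ forall_mem_insert.2 ⟨hL₂B z, ?_⟩⟩
    exact fun V hV ↦ (hL₁S z V hV).imp (hL₂L₁ z).trans (Disjoint.mono_left (hL₂L₁ z))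

theorem exists_refinement_subordinate [TopologicalSpace X] [BorelSpace X] [T2Space X]
    [IsFiniteMeasure μ] [μ.InnerRegularCompactLTTop] [NullSingletonClass μ] (h : IsPacking μ ν L)
    {S : Set (Set X)} (hSo : ∀ U ∈ S, IsOpen U) (hLS : ⋃ z, L z ⊆ ⋃₀ S) :
    ∃ L', IsPacking μ ν L' ∧ (∀ z, L' z ⊆ L z) ∧ ∀ z, ∃ U ∈ S, L' z ⊆ U := by
  obtain ⟨L₁, hL₁, hL₁L, hL₁c, -⟩ := h.exists_isCompact_refinement one_ne_zero
  have isCompact_iUnion : IsCompact (⋃ z, L₁ z) :=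
    sUnion_range L₁ ▸ hL₁.isLocallyConstant.range_finite.isCompact_sUnion (forall_mem_range.2 hL₁c)
  obtain ⟨T, hTS, hT, hL₁T⟩ := isCompact_iUnion.elim_finite_subcover_image hSo
    (sUnion_eq_biUnion ▸ (iUnion_mono hL₁L).trans hLS)
  obtain ⟨L₂, hL₂, hL₂L₁, hL₂T⟩ := hL₁.exists_refinement_forall_subset_or_disjoint hT
    fun U hU ↦ (hSo U (hTS hU)).measurableSet
  refine ⟨L₂, hL₂, fun z ↦ (hL₂L₁ z).trans (hL₁L z), fun z ↦ ?_⟩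
  obtain ⟨x, hx⟩ := hL₂.nonempty z
  obtain ⟨U, hU, hxU⟩ := mem_iUnion₂.1 (hL₁T (mem_iUnion_of_mem z (hL₂L₁ z hx)))
  exact ⟨U, hTS hU, (hL₂T z U hU).resolve_right (not_disjoint_iff.2 ⟨x, hx, hxU⟩)⟩

theorem exists_fine_refinement [EMetricSpace X] [BorelSpace X] [IsFiniteMeasure μ]
    [μ.InnerRegularCompactLTTop] [NullSingletonClass μ] (h : IsPacking μ ν L) {E : Set Z}
    (hE : IsClopen E) {δ : ℝ≥0∞} (hδ : δ ≠ 0) :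
    ∃ L', IsPacking μ ν L' ∧ (∀ z, L' z ⊆ L z) ∧ (∀ z, IsCompact (L' z)) ∧
      (∀ z, ediam (L' z) ≤ δ) ∧ (∀ w ∈ E, ∀ z ∉ E, Disjoint (L' w) (L' z)) ∧
      μ (⋃ z, L' z) ≤ ν univ + δ := by
  obtain ⟨L₁, hL₁, hL₁L, hL₁E⟩ := h.exists_refinement_separating hE
  obtain ⟨L₂, hL₂, hL₂L₁, hL₂δ⟩ := hL₁.exists_refinement_subordinate
    (S := range fun x ↦ eball x (δ / 2)) (forall_mem_range.2 fun _ ↦ isOpen_eball)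
    (fun x _ ↦ ⟨_, ⟨x, rfl⟩, mem_eball_self (ENNReal.half_pos hδ)⟩)
  obtain ⟨L₃, hL₃, hL₃L₂, hL₃c, hL₃ν⟩ := hL₂.exists_isCompact_refinement hδ
  have hL₃L₁ (z : Z) : L₃ z ⊆ L₁ z := (hL₃L₂ z).trans (hL₂L₁ z)
  refine ⟨L₃, hL₃, fun z ↦ (hL₃L₁ z).trans (hL₁L z), hL₃c, fun z ↦ ?_,
    fun w hw z hz ↦ (hL₁E w hw z hz).mono (hL₃L₁ w) (hL₃L₁ z), hL₃ν⟩
  obtain ⟨_, ⟨x, rfl⟩, hzx⟩ := hL₂δ z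
  calc
    ediam (L₃ z) ≤ ediam (eball x (δ / 2)) := ediam_mono ((hL₃L₂ z).trans hzx)
    _ ≤ 2 * (δ / 2) := ediam_eball_le
    _ = δ := ENNReal.mul_div_cancel two_ne_zero ENNReal.ofNat_ne_top

end Fine

end IsPacking

/-- A decreasing sequence of packings by compact sets, of diameter at most `δ n` and total measure
at most `ν univ + δ n` at stage `n`, which separates the points of `Z`. If `δ` tends to zero, then
`⋂ n, L n z` is a point depending continuously and injectively on `z`. -/
structure IsFusion {X Z : Type*} [PseudoEMetricSpace X] [MeasurableSpace X] [TopologicalSpace Z]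
    [MeasurableSpace Z] (μ : Measure X) (ν : Measure Z) (δ : ℕ → ℝ≥0) (L : ℕ → Z → Set X) :
    Prop where
  isPacking : ∀ n, IsPacking μ ν (L n)
  isCompact : ∀ n z, IsCompact (L n z)
  succ_subset : ∀ n z, L (n + 1) z ⊆ L n z
  ediam_le : ∀ n z, ediam (L n z) ≤ δ n
  exists_disjoint : ∀ w z, w ≠ z → ∃ n, Disjoint (L n w) (L n z)
  measure_iUnion_le : ∀ n, μ (⋃ z, L n z) ≤ ν univ + δ n

namespace IsFusion

variable {X Z : Type*} [EMetricSpace X] [MeasurableSpace X] [TopologicalSpace Z]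
  [MeasurableSpace Z] {μ : Measure X} {ν : Measure Z} {δ : ℕ → ℝ≥0}

theorem exists_isFusion [BorelSpace X] [IsFiniteMeasure μ] [μ.InnerRegularCompactLTTop]
    [NullSingletonClass μ] [CompactSpace Z] [T2Space Z] [TotallyDisconnectedSpace Z]
    [SecondCountableTopology Z] [OpensMeasurableSpace Z] [NullSingletonClass ν] [IsFiniteMeasure ν]
    [ν.OuterRegular] {M : Set X} (hM : MeasurableSet M) (hνM : ν univ < μ M) (hδ : ∀ n, δ n ≠ 0) :
    ∃ L, IsFusion μ ν δ L ∧ ∀ n z, L n z ⊆ M := by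
  have : Countable (Clopens Z) := Clopens.countable_iff_secondCountable.2 inferInstance
  obtain ⟨E, hE⟩ := exists_surjective_nat (Clopens Z)
  have exists_step (n : ℕ) (P : {L : Z → Set X // IsPacking μ ν L}) :
      ∃ P' : {L : Z → Set X // IsPacking μ ν L}, (∀ z, P'.1 z ⊆ P.1 z) ∧
        (∀ z, IsCompact (P'.1 z)) ∧ (∀ z, ediam (P'.1 z) ≤ δ n) ∧
        (∀ w ∈ E n, ∀ z ∉ E n, Disjoint (P'.1 w) (P'.1 z)) ∧ μ (⋃ z, P'.1 z) ≤ ν univ + δ n := by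
    obtain ⟨L', hL', refines⟩ :=
      P.2.exists_fine_refinement (E n).isClopen (ENNReal.coe_ne_zero.2 (hδ n))
    exact ⟨⟨L', hL'⟩, refines⟩
  choose step step_subset isCompact ediam_le disjoint measure_le using exists_step
  let P (n : ℕ) : {L : Z → Set X // IsPacking μ ν L} :=
    Nat.rec ⟨fun _ ↦ M, IsPacking.const hM hνM⟩ step n
  have P_subset (n : ℕ) (z : Z) : (P n).1 z ⊆ M := by
    induction n with
    | zero => exact Subset.rfl
    | succ n ih => exact (step_subset n (P n) z).trans ih
  refine ⟨fun n ↦ (P (n + 1)).1, ⟨fun n ↦ (P (n + 1)).2, fun n ↦ isCompact n (P n),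
    fun n ↦ step_subset (n + 1) (P (n + 1)), fun n ↦ ediam_le n (P n), fun w z hwz ↦ ?_,
    fun n ↦ measure_le n (P n)⟩, fun n ↦ P_subset (n + 1)⟩
  obtain ⟨U, hU, hwU, hzU⟩ := exists_isClopen_of_totally_separated hwz
  obtain ⟨n, hn⟩ := hE ⟨U, hU⟩
  exact ⟨n, disjoint n (P n) w (hn ▸ hwU) z (hn ▸ hzU)⟩

variable {L : ℕ → Z → Set X} {H : Z → X}

theorem exists_forall_mem (hL : IsFusion μ ν δ L) : ∃ H : Z → X, ∀ n z, H z ∈ L n z := by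
  have nonempty_iInter (z : Z) : (⋂ n, L n z).Nonempty :=
    IsCompact.nonempty_iInter_of_sequence_nonempty_isCompact_isClosed (fun n ↦ L n z)
      (fun n ↦ hL.succ_subset n z) (fun n ↦ (hL.isPacking n).nonempty z) (hL.isCompact 0 z)
      fun n ↦ (hL.isCompact n z).isClosed
  choose H hH using nonempty_iInter
  exact ⟨H, fun n z ↦ mem_iInter.1 (hH z) n⟩

theorem continuous (hL : IsFusion μ ν δ L) (hδ : Tendsto δ atTop (𝓝 0))
    (hH : ∀ n z, H z ∈ L n z) : Continuous H := by
  refine continuous_iff_continuousAt.2 fun z ↦ EMetric.tendsto_nhds.2 fun ε hε ↦ ?_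
  obtain ⟨n, hn⟩ := ((ENNReal.tendsto_coe.2 hδ).eventually_lt_const hε).exists
  filter_upwards [(hL.isPacking n).isLocallyConstant.eventually_eq z] with w hwz
  exact (edist_le_ediam_of_mem (hwz ▸ hH n w) (hH n z)).trans_lt ((hL.ediam_le n z).trans_lt hn)

theorem injective (hL : IsFusion μ ν δ L) (hH : ∀ n z, H z ∈ L n z) : Function.Injective H := by
  intro w z hwz
  by_contra hne
  obtain ⟨n, hn⟩ := hL.exists_disjoint w z hne
  exact disjoint_left.1 hn (hH n w) (hwz ▸ hH n z)

theorem measure_range_le (hL : IsFusion μ ν δ L) (hδ : Tendsto δ atTop (𝓝 0))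
    (hH : ∀ n z, H z ∈ L n z) : μ (range H) ≤ ν univ := by
  have tendsto_add : Tendsto (fun n ↦ ν univ + δ n) atTop (𝓝 (ν univ)) := by
    simpa using tendsto_const_nhds.add (ENNReal.tendsto_coe.2 hδ)
  refine ge_of_tendsto' tendsto_add fun n ↦ (measure_mono ?_).trans (hL.measure_iUnion_le n)
  exact range_subset_iff.2 fun z ↦ mem_iUnion_of_mem z (hH n z)

theorem measure_le_measure_image [OpensMeasurableSpace X] [IsFiniteMeasure μ]
    [CompactSpace Z] [OpensMeasurableSpace Z] (hL : IsFusion μ ν δ L) (hδ : Tendsto δ atTop (𝓝 0))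
    (hH : ∀ n z, H z ∈ L n z) {F : Set Z} (hF : IsClosed F) : ν F ≤ μ (H '' F) := by
  have isClosed_image : IsClosed (H '' F) :=
    (hF.isCompact.image (hL.continuous hδ hH)).isClosed
  have tendsto_cthickening : Tendsto (fun n ↦ μ (cthickening (δ n) (H '' F))) atTop
      (𝓝 (μ (H '' F))) :=
    (tendsto_measure_cthickening_of_isClosed ⟨1, one_pos, measure_ne_top μ _⟩ isClosed_image).comp
      (NNReal.tendsto_coe.2 hδ)
  refine ge_of_tendsto' tendsto_cthickening fun n ↦
    ((hL.isPacking n).measure_le_measure_biUnion F).trans (measure_mono ?_)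
  refine iUnion₂_subset fun z hz x hx ↦ ?_
  refine mem_cthickening_of_edist_le x (H z) _ _ (mem_image_of_mem H hz) ?_
  simpa using (edist_le_ediam_of_mem hx (hH n z)).trans (hL.ediam_le n z)

theorem measure_image [BorelSpace X] [IsFiniteMeasure μ] [CompactSpace Z] [BorelSpace Z]
    [IsFiniteMeasure ν] [ν.WeaklyRegular] (hL : IsFusion μ ν δ L) (hδ : Tendsto δ atTop (𝓝 0))
    (hH : ∀ n z, H z ∈ L n z) (A : Set Z) : μ (H '' A) = ν A := by
  have measurableEmbedding : MeasurableEmbedding H :=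
    ((hL.continuous hδ hH).isClosedEmbedding (hL.injective hH)).measurableEmbedding
  have le_comap : ν ≤ μ.comap H := measure_le_of_forall_isClosed fun F hF ↦
    (hL.measure_le_measure_image hδ hH hF).trans_eq (measurableEmbedding.comap_apply μ F).symm
  have comap_univ : μ.comap H univ = ν univ := by
    refine le_antisymm ?_ (le_comap univ)
    rw [measurableEmbedding.comap_apply, image_univ]
    exact hL.measure_range_le hδ hH
  rw [Measure.eq_of_le_of_measure_univ_eq le_comap comap_univ.symm, measurableEmbedding.comap_apply]

end IsFusion

theorem stmt_0_general {X Z : Type*} [TopologicalSpace X] [PolishSpace X] [MeasurableSpace X]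
    [BorelSpace X] [TopologicalSpace Z] [CompactSpace Z] [T2Space Z] [TotallyDisconnectedSpace Z]
    [SecondCountableTopology Z] [MeasurableSpace Z] [BorelSpace Z] (μ : Measure X) (ν : Measure Z)
    [NullSingletonClass μ] [NullSingletonClass ν] {Y : Set X} (hY : MeasurableSet Y)
    (hνY : ν univ < μ Y) (hμY : μ Y ≠ ∞) :
    ∃ H : Z → X, Continuous H ∧ Function.Injective H ∧ range H ⊆ Y ∧
      ∀ A, μ (H '' A) = ν A := by
  let := upgradeIsCompletelyMetrizable X
  have : IsFiniteMeasure ν := ⟨hνY.trans_le le_top⟩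
  have : IsFiniteMeasure (μ.restrict Y) := ⟨by simpa using hμY.lt_top⟩
  obtain ⟨δ, -, hδ, hδ₀⟩ := exists_seq_strictAnti_tendsto (0 : ℝ≥0)
  obtain ⟨L, hL, hLY⟩ := IsFusion.exists_isFusion (μ := μ.restrict Y) (ν := ν) hY
    (by rwa [Measure.restrict_apply_self]) fun n ↦ (hδ n).ne'
  obtain ⟨H, hH⟩ := hL.exists_forall_mem
  have image_subset (A : Set Z) : H '' A ⊆ Y := image_subset_iff.2 fun z _ ↦ hLY 0 z (hH 0 z)
  refine ⟨H, hL.continuous hδ₀ hH, hL.injective hH, image_univ ▸ image_subset univ, fun A ↦ ?_⟩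
  rw [← hL.measure_image hδ₀ hH A, Measure.restrict_eq_self μ (image_subset A)]

/-- **Measure-preserving embedding of the Cantor space in a Polish space.**
If `μ` is a nonsingular Borel measure on a Polish space `X` and `ν` is a nonsingular,
fully supported Borel measure on the Cantor space `ℕ → Bool` such that some Borel set
`Y ⊆ X` satisfies `ν(2^ℕ) < μ(Y) < ∞`, then there is a continuous injection
`H : 2^ℕ → X` with `μ(H '' A) = ν A` for every Borel `A`. -/
theorem stmt_0 {X : Type*} [TopologicalSpace X] [PolishSpace X]
    [MeasurableSpace X] [BorelSpace X]
    (μ : Measure X) (ν : Measure (ℕ → Bool))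
    (hμns : ∀ x : X, μ {x} = 0)
    (hνns : ∀ z : ℕ → Bool, ν {z} = 0)
    (hνfs : ∀ U : Set (ℕ → Bool), IsOpen U → U.Nonempty → 0 < ν U)
    (hY : ∃ Y : Set X, MeasurableSet Y ∧ ν univ < μ Y ∧ μ Y < ⊤) :
    ∃ H : (ℕ → Bool) → X, Continuous H ∧ Function.Injective H ∧
      ∀ A : Set (ℕ → Bool), MeasurableSet A → μ (H '' A) = ν A := by
  have : NullSingletonClass μ := ⟨hμns⟩
  have : NullSingletonClass ν := ⟨hνns⟩
  obtain ⟨Y, hY, hνY, hμY⟩ := hY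
  obtain ⟨H, hH, hHi, -, hHμ⟩ := stmt_0_general μ ν hY hνY hμY.ne
  exact ⟨H, hH, hHi, fun A _ ↦ hHμ A⟩
end

section
/- Let μ be the coin-tossing measure on the Cantor space 2^ℕ and let P₃ = {z : ℕ×ℕ → {0,1} : ∀n ∃m ∀k ≥ m, z(n,k) = 0}, a Π⁰₃-complete subset of the Polish space of functions ℕ×ℕ → {0,1}. There exists a map f assigning to each z : ℕ×ℕ → {0,1} a Borel set f(z) ⊆ 2^ℕ such that: (i) f is continuous into the measure algebra, i.e. for every z and every ε > 0 there is N ∈ ℕ such that for all w with w(i,j) = z(i,j) whenever i,j < N, one has μ(f(z) △ f(w)) ≤ ε; and (ii) z ∈ P₃ if and only if there exists a compact set K ⊆ 2^ℕ with μ(f(z) △ K) = 0. (This witnesses that the set of measure-classes of compact sets is Π⁰₃-hard in the measure algebra of 2^ℕ.) -/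
open MeasureTheory Set
open scoped symmDiff

/-- The basic clopen cylinder of length `n` around `x` in the Cantor space. -/
def cylinder (x : ℕ → Bool) (n : ℕ) : Set (ℕ → Bool) :=
  {y | ∀ i < n, y i = x i}

/-!
For a measure that is positive on nonempty open sets, an open set `U` is closed modulo null sets
exactly when its frontier is null: a closed set that agrees with `U` almost everywhere contains
`U`, hence `closure U`.

Fix disjoint nonempty open sets `C n`, such as annuli shrinking to a point, whose union has null
frontier. Let `V n k` be the intersection of `C n` with a thickening of the first `k + 1` terms of
a dense sequence, of radius chosen such that `V n k` has null frontier and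
`∑ k, μ (V n k) < μ (C n)`. A finite union of sets `V n k` has null frontier, whereas an infinite
union is dense in `C n` without having full measure there, so its frontier has positive measure.
Hence `f z = ⋃ {V n k | z n k = true}` has null frontier if and only if every row of `z` has
finitely many ones. The map `f` is continuous since `∑ μ (V n k)` converges.
-/

open Filter Function Metric TopologicalSpace
open scoped ENNReal Topology

lemma iUnion_inter_eq_of_pairwise_disjoint {X ι : Type*} {A C : ι → Set X}
    (hC : Pairwise (Disjoint on C)) (hAC : ∀ i, A i ⊆ C i) (i : ι) : (⋃ j, A j) ∩ C i = A i := by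
  refine (iUnion_inter _ _).trans (Subset.antisymm (iUnion_subset fun j => ?_) fun x hx =>
    mem_iUnion.2 ⟨i, hx, hAC i hx⟩)
  rcases eq_or_ne j i with rfl | hji
  · exact inter_subset_left
  · exact fun x hx => (disjoint_left.1 (hC hji) (hAC j hx.1) hx.2).elim

section Frontier

variable {X ι : Type*} [TopologicalSpace X]

lemma frontier_biUnion_subset_of_finite {s : Set ι} (hs : s.Finite) (A : ι → Set X) :
    frontier (⋃ i ∈ s, A i) ⊆ ⋃ i ∈ s, frontier (A i) := by
  rintro x ⟨hx, hx_int⟩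
  rw [hs.closure_biUnion] at hx
  obtain ⟨i, hi, hxi⟩ := mem_iUnion₂.1 hx
  exact mem_biUnion hi ⟨hxi, fun h => hx_int (interior_mono (subset_biUnion_of_mem hi) h)⟩

variable {A C : ι → Set X}

lemma frontier_iUnion_inter_eq (hC : Pairwise (Disjoint on C)) (hC_open : ∀ i, IsOpen (C i))
    (hAC : ∀ i, A i ⊆ C i) (i : ι) : frontier (⋃ j, A j) ∩ C i = frontier (A i) ∩ C i := by
  rw [← frontier_inter_open_inter (hC_open i), iUnion_inter_eq_of_pairwise_disjoint hC hAC]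

lemma closure_sdiff_iUnion_subset_frontier (hC_open : ∀ i, IsOpen (C i))
    {B : Set X} (hB : B ⊆ ⋃ i, C i) : closure B \ ⋃ i, C i ⊆ frontier (⋃ i, C i) := by
  rw [(isOpen_iUnion hC_open).frontier_eq]
  exact sdiff_subset_sdiff_left (closure_mono hB)

lemma frontier_iUnion_subset (hC : Pairwise (Disjoint on C)) (hC_open : ∀ i, IsOpen (C i))
    (hAC : ∀ i, A i ⊆ C i) :
    frontier (⋃ i, A i) ⊆ (⋃ i, frontier (A i)) ∪ frontier (⋃ i, C i) := by
  intro x hx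
  by_cases hxC : x ∈ ⋃ i, C i
  · obtain ⟨i, hi⟩ := mem_iUnion.1 hxC
    exact .inl (mem_iUnion.2
      ⟨i, ((frontier_iUnion_inter_eq hC hC_open hAC i).subset ⟨hx, hi⟩).1⟩)
  · exact .inr (closure_sdiff_iUnion_subset_frontier hC_open (iUnion_mono hAC)
      ⟨frontier_subset_closure hx, hxC⟩)

lemma frontier_subset_frontier_iUnion_union (hC : Pairwise (Disjoint on C))
    (hC_open : ∀ i, IsOpen (C i)) (hAC : ∀ i, A i ⊆ C i) (i : ι) :
    frontier (A i) ⊆ frontier (⋃ j, A j) ∪ frontier (⋃ j, C j) := by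
  intro x hx
  have hx_closure : x ∈ closure (A i) := frontier_subset_closure hx
  by_cases hxC : x ∈ ⋃ j, C j
  · obtain ⟨j, hj⟩ := mem_iUnion.1 hxC
    obtain ⟨y, hyj, hyi⟩ := mem_closure_iff.1 hx_closure (C j) (hC_open j) hj
    obtain rfl : i = j := hC.eq (not_disjoint_iff.2 ⟨y, hAC i hyi, hyj⟩)
    exact .inl ((frontier_iUnion_inter_eq hC hC_open hAC i).superset ⟨hx, hj⟩).1
  · exact .inr (closure_sdiff_iUnion_subset_frontier hC_open
      ((hAC i).trans (subset_iUnion C i)) ⟨hx_closure, hxC⟩)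

lemma measure_frontier_iUnion_eq_zero_iff [Countable ι] [MeasurableSpace X] {μ : Measure X}
    (hC : Pairwise (Disjoint on C)) (hC_open : ∀ i, IsOpen (C i))
    (hC_null : μ (frontier (⋃ i, C i)) = 0) (hAC : ∀ i, A i ⊆ C i) :
    μ (frontier (⋃ i, A i)) = 0 ↔ ∀ i, μ (frontier (A i)) = 0 :=
  ⟨fun h i => measure_mono_null (frontier_subset_frontier_iUnion_union hC hC_open hAC i)
      (measure_union_null h hC_null),
    fun h => measure_mono_null (frontier_iUnion_subset hC hC_open hAC)
      (measure_union_null (measure_iUnion_null h) hC_null)⟩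

end Frontier

lemma frontier_iUnion_Ioo_subset_of_antitone {α : Type*} [LinearOrder α] [TopologicalSpace α]
    [OrderTopology α] {r : ℕ → α} {l : α} (hr : Antitone r) (hl : Tendsto r atTop (𝓝 l)) :
    frontier (⋃ n, Ioo (r (n + 1)) (r n)) ⊆ insert l (range r) := by
  rw [(isOpen_iUnion fun _ => isOpen_Ioo).frontier_eq]
  rintro x ⟨hx, hx_notMem⟩
  obtain ⟨hlx, hx0⟩ : x ∈ Icc l (r 0) :=
    closure_minimal (iUnion_subset fun n => Ioo_subset_Icc_self.trans
      (Icc_subset_Icc (hr.le_of_tendsto hl _) (hr n.zero_le))) isClosed_Icc hx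
  rcases hlx.eq_or_lt with rfl | hlx
  · exact mem_insert _ _
  obtain ⟨n, hn, hn_le⟩ : ∃ n, r (n + 1) < x ∧ x ≤ r n := by
    by_contra! h
    have h_le (n : ℕ) : x ≤ r n := by
      induction n with
      | zero => exact hx0
      | succ n ih => exact not_lt.1 fun hn => (h n hn).not_ge ih
    exact hlx.not_ge (ge_of_tendsto' hl h_le)
  rcases hn_le.eq_or_lt with rfl | hlt
  · exact .inr (mem_range_self n)
  · exact (hx_notMem (mem_iUnion.2 ⟨n, hn, hlt⟩)).elim

section Measure

variable {X : Type*} [MeasurableSpace X] {μ : Measure X}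

lemma exists_finset_measure_symmDiff_biUnion_le {ι : Type*} [Countable ι] {B : ι → Set X}
    (hB : ∑' i, μ (B i) ≠ ∞) {ε : ℝ≥0∞} (hε : 0 < ε) :
    ∃ F : Finset ι, ∀ S T : Set ι, (∀ i ∈ F, i ∈ S ↔ i ∈ T) →
      μ ((⋃ i ∈ S, B i) ∆ ⋃ i ∈ T, B i) ≤ ε := by
  obtain ⟨F, hF⟩ :=
    ((ENNReal.tendsto_tsum_compl_atTop_zero hB).eventually_lt_const hε).exists
  refine ⟨F, fun S T hST => ?_⟩
  have hsub : (⋃ i ∈ S, B i) ∆ (⋃ i ∈ T, B i) ⊆ ⋃ i : {i // i ∉ F}, B i := by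
    rintro x (⟨hx, hx'⟩ | ⟨hx, hx'⟩) <;>
    · obtain ⟨i, hi, hxi⟩ := mem_iUnion₂.1 hx
      refine mem_iUnion.2 ⟨⟨i, fun hiF => hx' (mem_biUnion ?_ hxi)⟩, hxi⟩
      simpa only [hST i hiF] using hi
  exact ((measure_mono hsub).trans (measure_iUnion_le _)).trans hF.le

variable [TopologicalSpace X]

lemma exists_isClosed_measure_symmDiff_eq_zero_iff [μ.IsOpenPosMeasure] {U : Set X}
    (hU : IsOpen U) : (∃ K, IsClosed K ∧ μ (U ∆ K) = 0) ↔ μ (frontier U) = 0 := by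
  constructor
  · rintro ⟨K, hK, h_null⟩
    have hUK : U ⊆ K := sdiff_eq_empty.1 <| ((hU.sdiff hK).measure_eq_zero_iff μ).1 <|
      measure_mono_null subset_union_left h_null
    rw [hU.frontier_eq]
    exact measure_mono_null
      ((sdiff_subset_sdiff_left (closure_minimal hUK hK)).trans subset_union_right) h_null
  · intro h
    refine ⟨closure U, isClosed_closure, ?_⟩
    rwa [symmDiff_of_le subset_closure, ← hU.frontier_eq]

lemma measure_frontier_ne_zero_of_subset_closure {C W : Set X}
    (hCW : C ⊆ closure W) (hlt : μ W < μ C) : μ (frontier W) ≠ 0 := by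
  intro h
  refine hlt.not_ge ?_
  calc μ C ≤ μ (W ∪ frontier W) :=
        measure_mono (hCW.trans (closure_eq_self_union_frontier W).subset)
    _ ≤ μ W := (measure_union_le _ _).trans_eq (by rw [h, add_zero])

lemma nhdsNE_neBot_of_measure_singleton_eq_zero [μ.IsOpenPosMeasure] {x : X} (h : μ {x} = 0) :
    (𝓝[≠] x).NeBot :=
  mem_closure_iff_nhdsWithin_neBot.1
    (interior_eq_empty_iff_dense_compl.1 (Measure.interior_eq_empty_of_null h) x)

end Measure

lemma exists_strictAnti_dist_tendsto_zero {X : Type*} [MetricSpace X] (x₀ : X)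
    [(𝓝[≠] x₀).NeBot] : ∃ x : ℕ → X, StrictAnti (fun n => dist (x n) x₀) ∧
      Tendsto (fun n => dist (x n) x₀) atTop (𝓝 0) := by
  have h_mem : x₀ ∈ closure {x₀}ᶜ := mem_closure_iff_nhdsWithin_neBot.2 ‹_›
  have h_glb : IsGLB ((dist · x₀) '' {x₀}ᶜ) 0 := by
    refine ⟨forall_mem_image.2 fun x _ => dist_nonneg, fun b hb => ?_⟩
    refine le_of_forall_pos_lt_add fun ε hε => ?_
    obtain ⟨x, hx, hxε⟩ := Metric.mem_closure_iff.1 h_mem ε hε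
    exact (hb (mem_image_of_mem _ hx)).trans_lt (by rwa [zero_add, dist_comm])
  have h_zero : (0 : ℝ) ∉ (dist · x₀) '' {x₀}ᶜ := by simp
  obtain ⟨d, hd_anti, -, hd_tendsto, hd_mem⟩ := h_glb.exists_seq_strictAnti_tendsto_of_notMem h_zero
    ((closure_nonempty_iff.1 ⟨x₀, h_mem⟩).image _)
  choose x _ hxd using hd_mem
  obtain rfl : (fun n => dist (x n) x₀) = d := funext hxd
  exact ⟨x, hd_anti, hd_tendsto⟩

lemma exists_thickening_measure_lt_of_isClosed {X : Type*} [PseudoMetricSpace X]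
    [MeasurableSpace X] [OpensMeasurableSpace X] (μ : Measure X) [IsFiniteMeasure μ] {s : Set X}
    (hs : IsClosed s) (hμs : μ s = 0) {ε : ℝ≥0∞} (hε : 0 < ε) :
    ∃ r > 0, μ (frontier (thickening r s)) = 0 ∧ μ (thickening r s) < ε := by
  have h_tendsto : Tendsto (fun r => μ (thickening r s)) (𝓝[>] 0) (𝓝 0) :=
    hμs ▸ tendsto_measure_thickening_of_isClosed ⟨1, one_pos, measure_ne_top _ _⟩ hs
  obtain ⟨δ, hδ, hδ_lt⟩ :=
    mem_nhdsGT_iff_exists_Ioo_subset.1 (h_tendsto.eventually_lt_const hε)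
  obtain ⟨r, hr, hr_null⟩ := exists_null_frontier_thickening μ s hδ
  exact ⟨r, hr.1, hr_null, hδ_lt hr⟩

section MetricSpace

variable {X : Type*} [MetricSpace X] [MeasurableSpace X] [OpensMeasurableSpace X]
  (μ : Measure X) [IsFiniteMeasure μ] [NullSingletonClass μ]

lemma exists_seq_isOpen_dense_of_infinite [SeparableSpace X] {C : Set X} (hC : IsOpen C)
    (hC_null : μ (frontier C) = 0) {ε : ℝ≥0∞} (hε : ε ≠ 0) :
    ∃ V : ℕ → Set X, (∀ k, IsOpen (V k)) ∧ (∀ k, V k ⊆ C) ∧ (∀ k, μ (frontier (V k)) = 0) ∧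
      ∑' k, μ (V k) < ε ∧ ∀ S : Set ℕ, S.Infinite → C ⊆ closure (⋃ k ∈ S, V k) := by
  rcases isEmpty_or_nonempty X with _ | _
  · exact ⟨fun _ => ∅, by simp [pos_iff_ne_zero, hε, eq_empty_of_isEmpty C]⟩
  obtain ⟨δ, hδ, hδ_sum⟩ := ENNReal.exists_pos_sum_of_countable' hε ℕ
  have h_fin (k : ℕ) : (denseSeq X '' Iic k).Finite := (finite_Iic k).image _
  choose r hr hr_null hr_lt using fun k =>
    exists_thickening_measure_lt_of_isClosed μ (h_fin k).isClosed ((h_fin k).measure_zero μ) (hδ k)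
  refine ⟨fun k => C ∩ thickening (r k) (denseSeq X '' Iic k),
    fun k => hC.inter isOpen_thickening, fun k => inter_subset_left, fun k => ?_,
    (ENNReal.tsum_le_tsum fun k => (measure_mono inter_subset_right).trans
      (hr_lt k).le).trans_lt hδ_sum, fun S hS => ?_⟩
  · exact measure_mono_null ((frontier_inter_subset _ _).trans (union_subset_union
      inter_subset_left inter_subset_right)) (measure_union_null hC_null (hr_null k))
  · refine ((denseRange_denseSeq X).open_subset_closure_inter hC).trans (closure_mono ?_)
    rintro _ ⟨hxC, j, rfl⟩
    obtain ⟨k, hk, hjk⟩ := hS.exists_gt j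
    exact mem_biUnion hk ⟨hxC, self_subset_thickening (hr k) _ (mem_image_of_mem _ hjk.le)⟩

lemma exists_seq_isOpen_measure_frontier_eq_zero_iff [SeparableSpace X] {C : Set X}
    (hC : IsOpen C) (hC_null : μ (frontier C) = 0) (hC_pos : μ C ≠ 0) :
    ∃ V : ℕ → Set X, (∀ k, IsOpen (V k)) ∧ (∀ k, V k ⊆ C) ∧ ∑' k, μ (V k) ≤ μ C ∧
      ∀ S : Set ℕ, μ (frontier (⋃ k ∈ S, V k)) = 0 ↔ S.Finite := by
  obtain ⟨V, hV_open, hVC, hV_null, hV_sum, hV_dense⟩ :=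
    exists_seq_isOpen_dense_of_infinite μ hC hC_null hC_pos
  refine ⟨V, hV_open, hVC, hV_sum.le, fun S => ⟨fun h => ?_, fun hS => ?_⟩⟩
  · by_contra hS
    have hlt : μ (⋃ k ∈ S, V k) < μ C :=
      ((measure_mono (iUnion₂_subset_iUnion _ _)).trans (measure_iUnion_le V)).trans_lt hV_sum
    exact measure_frontier_ne_zero_of_subset_closure (hV_dense S hS) hlt h
  · exact measure_mono_null (frontier_biUnion_subset_of_finite hS V)
      ((measure_biUnion_null_iff hS.countable).2 fun k _ => hV_null k)

variable [μ.IsOpenPosMeasure]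

lemma exists_seq_pairwise_disjoint_isOpen_measure_frontier_iUnion_eq_zero [Nonempty X] :
    ∃ C : ℕ → Set X, Pairwise (Disjoint on C) ∧ (∀ n, IsOpen (C n)) ∧ (∀ n, (C n).Nonempty) ∧
      μ (frontier (⋃ n, C n)) = 0 := by
  obtain ⟨x₀⟩ := ‹Nonempty X›
  have := nhdsNE_neBot_of_measure_singleton_eq_zero (measure_singleton (μ := μ) x₀)
  obtain ⟨x, hx_anti, hx_tendsto⟩ := exists_strictAnti_dist_tendsto_zero x₀
  have h_cont : Continuous (dist · x₀ : X → ℝ) := continuous_id.dist continuous_const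
  have h_countable : {t : ℝ | 0 < μ {y | dist y x₀ = t}}.Countable :=
    Measure.countable_meas_level_set_pos h_cont.measurable
  have h_radius (n : ℕ) :
      ∃ r, μ {y | dist y x₀ = r} = 0 ∧ dist (x (n + 1)) x₀ < r ∧ r < dist (x n) x₀ := by
    obtain ⟨r, hr_null, hr⟩ :=
      (h_countable.dense_compl ℝ).exists_between (hx_anti n.lt_succ_self)
    exact ⟨r, by simpa using hr_null, hr⟩
  choose r hr_null hr using h_radius
  have hr_anti : Antitone r := antitone_nat_of_succ_le fun n => ((hr (n + 1)).2.trans (hr n).1).le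
  have hr_tendsto : Tendsto r atTop (𝓝 0) :=
    tendsto_of_tendsto_of_tendsto_of_le_of_le (hx_tendsto.comp (tendsto_add_atTop_nat 1))
      hx_tendsto (fun n => (hr n).1.le) fun n => (hr n).2.le
  refine ⟨fun n => (dist · x₀) ⁻¹' Ioo (r (n + 1)) (r n),
    fun m n hmn => (hr_anti.pairwise_disjoint_on_Ioo_succ hmn).preimage _,
    fun n => isOpen_Ioo.preimage h_cont, fun n => ⟨x (n + 1), (hr (n + 1)).2, (hr n).1⟩, ?_⟩
  rw [← preimage_iUnion]
  refine measure_mono_null ((h_cont.frontier_preimage_subset _).trans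
    (preimage_mono (frontier_iUnion_Ioo_subset_of_antitone hr_anti hr_tendsto))) ?_
  rw [← biUnion_preimage_singleton,
    measure_biUnion_null_iff ((countable_range r).insert 0), forall_mem_insert, forall_mem_range]
  exact ⟨by simp [preimage, dist_eq_zero], hr_null⟩

theorem exists_isOpen_tsum_ne_top_measure_frontier_eq_zero_iff [SeparableSpace X] [Nonempty X] :
    ∃ V : ℕ × ℕ → Set X, (∀ p, IsOpen (V p)) ∧ ∑' p, μ (V p) ≠ ∞ ∧
      ∀ S : Set (ℕ × ℕ), μ (frontier (⋃ p ∈ S, V p)) = 0 ↔ ∀ n, {k | (n, k) ∈ S}.Finite := by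
  obtain ⟨C, hC_disj, hC_open, hC_ne, hC_null⟩ :=
    exists_seq_pairwise_disjoint_isOpen_measure_frontier_iUnion_eq_zero μ
  have hC_null' : ∀ n, μ (frontier (C n)) = 0 :=
    (measure_frontier_iUnion_eq_zero_iff hC_disj hC_open hC_null fun _ => Subset.rfl).1 hC_null
  choose V hV_open hVC hV_sum hV_iff using fun n =>
    exists_seq_isOpen_measure_frontier_eq_zero_iff μ (hC_open n) (hC_null' n)
      ((hC_open n).measure_ne_zero μ (hC_ne n))
  refine ⟨fun p => V p.1 p.2, fun p => hV_open _ _, ne_top_of_le_ne_top (measure_ne_top μ univ) ?_,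
    fun S => ?_⟩
  · calc ∑' p : ℕ × ℕ, μ (V p.1 p.2) = ∑' n, ∑' k, μ (V n k) :=
          ENNReal.tsum_prod (f := fun n k => μ (V n k))
      _ ≤ ∑' n, μ (C n) := ENNReal.tsum_le_tsum hV_sum
      _ ≤ μ (⋃ n, C n) :=
          tsum_meas_le_meas_iUnion_of_disjoint μ (fun n => (hC_open n).measurableSet) hC_disj
      _ ≤ μ univ := measure_mono (subset_univ _)
  · have h_rows : ⋃ p ∈ S, V p.1 p.2 = ⋃ n, ⋃ k ∈ {k | (n, k) ∈ S}, V n k := by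
      ext; simp
    rw [h_rows, measure_frontier_iUnion_eq_zero_iff hC_disj hC_open hC_null
      fun n => iUnion₂_subset fun k _ => hVC n k]
    exact forall_congr' fun n => hV_iff n _

end MetricSpace

lemma exists_forall_ge_eq_false_iff_finite {a : ℕ → Bool} :
    (∃ m, ∀ k ≥ m, a k = false) ↔ {k | a k = true}.Finite := by
  rw [← eventually_atTop, ← Nat.cofinite_eq_atTop, eventually_cofinite]
  simp only [Bool.not_eq_false]

theorem stmt_11_general {X : Type*} [TopologicalSpace X] [MetrizableSpace X] [SeparableSpace X]
    [Nonempty X] [MeasurableSpace X] [OpensMeasurableSpace X] (μ : Measure X) [IsFiniteMeasure μ]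
    [NullSingletonClass μ] [μ.IsOpenPosMeasure] :
    ∃ f : (ℕ → ℕ → Bool) → Set X,
      (∀ z, MeasurableSet (f z)) ∧
      (∀ z : ℕ → ℕ → Bool, ∀ ε : ℝ, 0 < ε → ∃ N : ℕ, ∀ w : ℕ → ℕ → Bool,
        (∀ i < N, ∀ j < N, w i j = z i j) → μ (f z ∆ f w) ≤ ENNReal.ofReal ε) ∧
      (∀ z : ℕ → ℕ → Bool,
        (∀ n : ℕ, ∃ m : ℕ, ∀ k ≥ m, z n k = false) ↔
        ∃ K : Set X, IsClosed K ∧ μ (f z ∆ K) = 0) := by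
  let := metrizableSpaceMetric X
  obtain ⟨V, hV_open, hV_sum, hV_iff⟩ :=
    exists_isOpen_tsum_ne_top_measure_frontier_eq_zero_iff μ
  have h_open (z : ℕ → ℕ → Bool) : IsOpen (⋃ p ∈ {p : ℕ × ℕ | z p.1 p.2 = true}, V p) :=
    isOpen_biUnion fun p _ => hV_open p
  refine ⟨fun z => ⋃ p ∈ {p : ℕ × ℕ | z p.1 p.2 = true}, V p, fun z => (h_open z).measurableSet,
    fun z ε hε => ?_, fun z => ?_⟩
  · obtain ⟨F, hF⟩ :=
      exists_finset_measure_symmDiff_biUnion_le hV_sum (ENNReal.ofReal_pos.2 hε)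
    obtain ⟨⟨a, b⟩, hab⟩ := F.bddAbove
    refine ⟨max a b + 1, fun w hzw => hF _ _ fun p hp => ?_⟩
    have hp_le : p.1 ≤ a ∧ p.2 ≤ b := hab hp
    simp only [mem_ofPred_eq, hzw p.1 (by omega) p.2 (by omega)]
  · exact (forall_congr' fun n => exists_forall_ge_eq_false_iff_finite).trans
      ((hV_iff _).symm.trans (exists_isClosed_measure_symmDiff_eq_zero_iff (h_open z)).symm)

section Cylinder

variable {E : ℕ → Type*} [∀ n, MeasurableSpace (E n)] {μ : Measure (∀ n, E n)}

lemma nullSingletonClass_of_tendsto_measure_cylinder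
    (h : ∀ x, Tendsto (fun n => μ (PiNat.cylinder x n)) atTop (𝓝 0)) : NullSingletonClass μ where
  measure_singleton x := le_antisymm
    (ge_of_tendsto' (h x) fun n => measure_mono (singleton_subset_iff.2
      (PiNat.self_mem_cylinder x n))) zero_le

lemma isOpenPosMeasure_of_measure_cylinder_ne_zero [∀ n, TopologicalSpace (E n)]
    [∀ n, DiscreteTopology (E n)] (h : ∀ x n, μ (PiNat.cylinder x n) ≠ 0) :
    μ.IsOpenPosMeasure where
  open_pos U hU := by
    rintro ⟨x, hx⟩ hU_null
    obtain ⟨_, ⟨y, n, rfl⟩, -, hsub⟩ :=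
      (PiNat.isTopologicalBasis_cylinders E).exists_subset_of_mem_open hx hU
    exact h y n (measure_mono_null hsub hU_null)

end Cylinder

/-- **`Π⁰₃`-hardness of the family of (classes of) compact sets in the measure algebra of
the Cantor space.** Let `μ` be the coin-tossing measure on `2^ℕ` and let
`P₃ = {z | ∀n ∃m ∀k ≥ m, z n k = false}`. There is a map `f` from `ℕ×ℕ → Bool` to Borel
subsets of `2^ℕ` that is continuous into the measure algebra and such that `z ∈ P₃` iff
`f z` is equal mod `μ`-null sets to a compact set. -/
theorem stmt_11 (μ : Measure (ℕ → Bool))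
    (hμ : ∀ (x : ℕ → Bool) (n : ℕ), μ (cylinder x n) = 1 / 2 ^ n) :
    ∃ f : (ℕ → ℕ → Bool) → Set (ℕ → Bool),
      (∀ z, MeasurableSet (f z)) ∧
      (∀ z : ℕ → ℕ → Bool, ∀ ε : ℝ, 0 < ε → ∃ N : ℕ, ∀ w : ℕ → ℕ → Bool,
        (∀ i < N, ∀ j < N, w i j = z i j) → μ (f z ∆ f w) ≤ ENNReal.ofReal ε) ∧
      (∀ z : ℕ → ℕ → Bool,
        (∀ n : ℕ, ∃ m : ℕ, ∀ k ≥ m, z n k = false) ↔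
        ∃ K : Set (ℕ → Bool), IsCompact K ∧ μ (f z ∆ K) = 0) := by
  have h_cylinder (x : ℕ → Bool) (n : ℕ) : μ (PiNat.cylinder x n) = 2⁻¹ ^ n :=
    (hμ x n).trans (by rw [one_div, ENNReal.inv_pow])
  have : IsProbabilityMeasure μ := ⟨by simpa using h_cylinder default 0⟩
  have : NullSingletonClass μ := nullSingletonClass_of_tendsto_measure_cylinder fun x => by
    simpa only [h_cylinder] using
      ENNReal.tendsto_pow_atTop_nhds_zero_of_lt_one (r := 2⁻¹) (by simp)
  have : μ.IsOpenPosMeasure :=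
    isOpenPosMeasure_of_measure_cylinder_ne_zero fun x n => by simp [h_cylinder]
  have h_compact (K : Set (ℕ → Bool)) : IsCompact K ↔ IsClosed K :=
    ⟨IsCompact.isClosed, IsClosed.isCompact⟩
  simpa only [h_compact] using stmt_11_general μ
end

section
/- For each n ≥ 1 there exists a bounded spongy subset of ℝⁿ (with respect to Lebesgue measure and Euclidean open balls): a bounded Lebesgue-measurable set S ⊆ ℝⁿ such that no point x ∈ ℝⁿ has density D_S(x) strictly between 0 and 1, while there exists at least one point at which the density of S does not exist. Furthermore S can be taken to be open, and it can also be taken to be closed. -/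
open MeasureTheory Metric Set Filter Topology

/-- The density of a set `A` at a point `x`: the limit, as `ε → 0⁺`, of
`μ(A ∩ B(x,ε))/μ(B(x,ε))`. -/
def HasDensity {X : Type*} [MetricSpace X] [MeasurableSpace X]
    (μ : Measure X) (A : Set X) (x : X) (v : ℝ) : Prop :=
  Tendsto (fun e : ℝ => (μ (A ∩ ball x e)).toReal / (μ (ball x e)).toReal)
    (𝓝[>] (0 : ℝ)) (𝓝 v)

/-- `S` is spongy (for the measure `μ`): there is no point at which the density of `S`
exists and lies strictly between `0` and `1`, but there is a point at which the density
of `S` does not exist. -/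
def IsSpongy {X : Type*} [MetricSpace X] [MeasurableSpace X]
    (μ : Measure X) (S : Set X) : Prop :=
  (∀ (x : X) (v : ℝ), 0 < v → v < 1 → ¬ HasDensity μ S x v) ∧
  (∃ x : X, ¬ ∃ v : ℝ, HasDensity μ S x v)

/-!
The sets are radial, `{x | ‖x‖ ∈ R}`. If `R` has a finite frontier, the density is `0`, `1 / 2` or
`1` at every point other than the origin. Filling a thin collar of the frontier with fine stripes
of mean density `1 / 3` moves some ball ratio about every point away from `1 / 2`: in the limit of
fine stripes the ratios are averages, with weights `2 / 3` and `1 / 3`, of those without and with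
the full collar. The frontier is finite again, so at smaller scales the ratios return close to `0`,
`1 / 2` or `1`. Both events are stable, uniformly on compact sets, under small enlargements of the
set, hence recur at arbitrarily small scales in the union of all stages: a density there lies in
`{0, 1 / 2, 1}` but is not `1 / 2`. The stripes avoid a neighbourhood of the radius `1`, so that
each stage has density `1 / 2` on the unit sphere, and there the union has no density. With
the open unit ball as first stage the union is an open sponge; with the exterior of the closed unit
ball as first stage, the complement of the union is a closed one.
-/

section Locality

variable {X : Type*} [MetricSpace X] [MeasurableSpace X] {μ : Measure X} {A B : Set X} {x : X}
  {v : ℝ}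

/-- The proportion of the ball of radius `e` about `x` filled by `A`, in real numbers. -/
noncomputable def ballRatio (μ : Measure X) (A : Set X) (x : X) (e : ℝ) : ℝ :=
  μ.real (A ∩ ball x e) / μ.real (ball x e)

lemma ballRatio_eventuallyEq (h : A =ᶠ[ae μ ⊓ 𝓝 x] B) :
    ballRatio μ A x =ᶠ[𝓝[>] 0] ballRatio μ B x := by
  obtain ⟨s, hs, t, ht, hst⟩ := mem_inf_iff_superset.1 h
  obtain ⟨r, hr, hrt⟩ := Metric.mem_nhds_iff.1 ht
  filter_upwards [Ioo_mem_nhdsGT hr] with e he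
  have hae : (A ∩ ball x e : Set X) =ᵐ[μ] (B ∩ ball x e : Set X) := by
    filter_upwards [hs] with y hys
    refine propext (and_congr_left fun hye => iff_of_eq ?_)
    exact hst ⟨hys, hrt (ball_subset_ball he.2.le hye)⟩
  rw [ballRatio, measureReal_congr hae, ballRatio]

lemma HasDensity.congr (h : HasDensity μ A x v) (hAB : A =ᶠ[ae μ ⊓ 𝓝 x] B) :
    HasDensity μ B x v :=
  Tendsto.congr' (ballRatio_eventuallyEq hAB) h

lemma hasDensity_empty : HasDensity μ ∅ x 0 := by
  simp [HasDensity]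

lemma hasDensity_zero_of_compl_mem_nhds (h : Aᶜ ∈ 𝓝 x) : HasDensity μ A x 0 :=
  hasDensity_empty.congr ((eventuallyEq_empty.2 h).symm.filter_mono inf_le_right)

variable [ProperSpace X] [μ.IsOpenPosMeasure] [IsFiniteMeasureOnCompacts μ]

lemma measureReal_ball_pos (μ : Measure X) [μ.IsOpenPosMeasure] [IsFiniteMeasureOnCompacts μ]
    (x : X) {e : ℝ} (he : 0 < e) : 0 < μ.real (ball x e) :=
  ENNReal.toReal_pos (measure_ball_pos μ x he).ne' measure_ball_lt_top.ne

lemma HasDensity.compl (hA : MeasurableSet A)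
    (h : HasDensity μ A x v) : HasDensity μ Aᶜ x (1 - v) := by
  refine Tendsto.congr' ?_ (h.const_sub 1)
  filter_upwards [self_mem_nhdsWithin] with e he
  have hsum : μ.real (A ∩ ball x e) + μ.real (Aᶜ ∩ ball x e) = μ.real (ball x e) := by
    rw [inter_comm A, inter_comm Aᶜ, ← sdiff_eq]
    exact measureReal_inter_add_sdiff hA measure_ball_lt_top.ne
  change 1 - μ.real (A ∩ ball x e) / μ.real (ball x e) =
    μ.real (Aᶜ ∩ ball x e) / μ.real (ball x e)
  rw [one_sub_div (measureReal_ball_pos μ x he).ne', ← hsum, add_sub_cancel_left]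

lemma hasDensity_univ : HasDensity μ univ x 1 := by
  simpa using (hasDensity_empty (μ := μ) (x := x)).compl MeasurableSet.empty

lemma hasDensity_one_of_mem_nhds (h : A ∈ 𝓝 x) : HasDensity μ A x 1 :=
  hasDensity_univ.congr ((eventuallyEq_univ.2 h).symm.filter_mono inf_le_right)

lemma IsSpongy.compl (hA : MeasurableSet A) (h : IsSpongy μ A) :
    IsSpongy μ Aᶜ := by
  have hback : ∀ {x v}, HasDensity μ Aᶜ x v → HasDensity μ A x (1 - v) := fun hv => by
    simpa using hv.compl hA.compl
  refine ⟨fun x v h0 h1 hv => h.1 x (1 - v) (by linarith) (by linarith) (hback hv), ?_⟩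
  obtain ⟨x, hx⟩ := h.2
  exact ⟨x, fun ⟨v, hv⟩ => hx ⟨1 - v, hback hv⟩⟩

end Locality

section SmoothBoundary

variable {E : Type*} [NormedAddCommGroup E] [NormedSpace ℝ E]

lemma eventually_add_smul_lt_iff {F : E → ℝ} {φ : E →L[ℝ] ℝ} {x z : E}
    (hF : HasFDerivAt F φ x) (hz : φ z ≠ 0) :
    ∀ᶠ e : ℝ in 𝓝[>] 0, F (x + e • z) < F x ↔ φ z < 0 := by
  have hslope := (hF.hasLineDerivAt z).tendsto_slope_zero_right
  rcases hz.lt_or_gt with hneg | hpos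
  · filter_upwards [hslope.eventually_lt_const hneg, self_mem_nhdsWithin] with e he hepos
    simpa [hneg, inv_pos.2 (mem_Ioi.1 hepos), smul_eq_mul, mul_neg_iff,
      (inv_pos.2 (mem_Ioi.1 hepos)).not_gt] using he
  · filter_upwards [hslope.eventually_const_lt hpos, self_mem_nhdsWithin] with e he hepos
    have := (pos_iff_pos_of_mul_pos he).1 (inv_pos.2 hepos)
    exact iff_of_false (by linarith) hpos.not_gt

variable [FiniteDimensional ℝ E] [MeasurableSpace E] [BorelSpace E] (μ : Measure E)
  [μ.IsAddHaarMeasure]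

lemma ballRatio_eq_rescaled (A : Set E) (x : E) {e : ℝ} (he : 0 < e) :
    ballRatio μ A x e = μ.real (ball 0 1 ∩ {z | x + e • z ∈ A}) / μ.real (ball 0 1) := by
  have key (B : Set E) : μ.real (ball 0 1 ∩ {z | x + e • z ∈ B}) =
      |(e ^ Module.finrank ℝ E)⁻¹| * μ.real (B ∩ ball x e) := by
    have hset : ball 0 1 ∩ {z | x + e • z ∈ B} = (e • ·) ⁻¹' ((x + ·) ⁻¹' (B ∩ ball x e)) := by
      ext z
      simp only [mem_ofPred_eq, mem_preimage, mem_inter_iff, mem_ball, dist_zero_right,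
        dist_self_add_left, norm_smul, Real.norm_eq_abs, abs_of_pos he]
      rw [and_comm, mul_lt_iff_lt_one_right he]
    rw [hset, measureReal_def, Measure.addHaar_preimage_smul μ he.ne', measure_preimage_add,
      ENNReal.toReal_mul, ENNReal.toReal_ofReal (abs_nonneg _), measureReal_def]
  have hball : μ.real (ball (0 : E) 1) = |(e ^ Module.finrank ℝ E)⁻¹| * μ.real (ball x e) := by
    simpa using key univ
  rw [key, hball, ballRatio, mul_div_mul_left]
  positivity

lemma measure_setOf_eq_zero_of_ne_zero {φ : E →L[ℝ] ℝ} (hφ : φ ≠ 0) : μ {z | φ z = 0} = 0 := by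
  refine Measure.addHaar_submodule μ φ.ker fun hker => hφ ?_
  exact_mod_cast LinearMap.ker_eq_top.1 hker

lemma measureReal_ball_inter_setOf_neg {φ : E →L[ℝ] ℝ} (hφ : φ ≠ 0) :
    μ.real (ball 0 1 ∩ {z | φ z < 0}) = μ.real (ball (0 : E) 1) / 2 := by
  have hneg : MeasurableSet {z | φ z < 0} := measurableSet_lt φ.measurable measurable_const
  have hsymm : μ.real (ball 0 1 ∩ {z | φ z < 0}) = μ.real (ball 0 1 ∩ {z | 0 < φ z}) := by
    rw [measureReal_def, measureReal_def, ← Measure.measure_preimage_neg]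
    congr 2
    ext z
    simp
  have hdiff : (ball 0 1 \ {z | φ z < 0} : Set E) =ᵐ[μ] (ball 0 1 ∩ {z | 0 < φ z} : Set E) := by
    filter_upwards [measure_eq_zero_iff_ae_notMem.1 (measure_setOf_eq_zero_of_ne_zero μ hφ)]
      with z hz
    exact propext (and_congr_right fun _ => not_lt.trans (Ne.symm hz).le_iff_lt)
  have hsum := measureReal_inter_add_sdiff (μ := μ) (s := ball (0 : E) 1) hneg
    measure_ball_lt_top.ne
  rw [measureReal_congr hdiff, ← hsymm] at hsum
  linarith

lemma hasDensity_setOf_lt_of_hasFDerivAt {F : E → ℝ} {φ : E →L[ℝ] ℝ} {x : E}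
    (hmeas : Measurable F) (hF : HasFDerivAt F φ x) (hφ : φ ≠ 0) :
    HasDensity μ {y | F y < F x} x (1 / 2) := by
  have hlim : Tendsto (fun e : ℝ => μ (ball 0 1 ∩ {z | F (x + e • z) < F x})) (𝓝[>] 0)
      (𝓝 (μ (ball 0 1 ∩ {z | φ z < 0}))) := by
    refine tendsto_measure_of_ae_tendsto_indicator _
      (measurableSet_ball.inter (measurableSet_lt φ.measurable measurable_const))
      (fun e => measurableSet_ball.inter
        (measurableSet_lt (hmeas.comp (by fun_prop)) measurable_const))
      (measurableSet_ball (x := (0 : E)) (ε := 1)) measure_ball_lt_top.ne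
      (Eventually.of_forall fun _ => inter_subset_left) ?_
    filter_upwards [measure_eq_zero_iff_ae_notMem.1 (measure_setOf_eq_zero_of_ne_zero μ hφ)]
      with z hz
    filter_upwards [eventually_add_smul_lt_iff hF hz] with e he
    exact and_congr_right fun _ => he
  have hreal := ((ENNReal.tendsto_toReal (measure_ne_top_of_subset inter_subset_left
    measure_ball_lt_top.ne)).comp hlim).div_const (μ.real (ball (0 : E) 1))
  rw [← measureReal_def, measureReal_ball_inter_setOf_neg μ hφ, div_right_comm,
    div_self (measureReal_ball_pos μ (0 : E) one_pos).ne'] at hreal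
  refine hreal.congr' ?_
  filter_upwards [self_mem_nhdsWithin] with e he
  exact (ballRatio_eq_rescaled μ {y | F y < F x} x he).symm

end SmoothBoundary

section Germs

lemma subset_or_subset_compl_of_disjoint_frontier {X : Type*} [TopologicalSpace X] {I T : Set X}
    (hI : IsPreconnected I) (h : Disjoint I (frontier T)) : I ⊆ T ∨ I ⊆ Tᶜ := by
  refine (hI.subset_or_subset isOpen_interior isOpen_interior
    (disjoint_compl_right.mono interior_subset interior_subset) ?_).imp
    (·.trans interior_subset) (·.trans interior_subset)
  rw [← compl_frontier_eq_union_interior]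
  exact h.subset_compl_right

lemma mem_nhds_or_compl_mem_nhds_of_notMem_frontier {X : Type*} [TopologicalSpace X] {T : Set X}
    {x : X} (h : x ∉ frontier T) : T ∈ 𝓝 x ∨ Tᶜ ∈ 𝓝 x := by
  simpa only [← mem_compl_iff, compl_frontier_eq_union_interior, mem_union,
    mem_interior_iff_mem_nhds] using h

lemma eventuallyConst_set_of_hasBasis_isPreconnected {X ι : Type*} [TopologicalSpace X]
    {l : Filter X} {p : ι → Prop} {s : ι → Set X} (hl : l.HasBasis p s)
    (hs : ∀ i, p i → IsPreconnected (s i)) {T : Set X} (hT : ∀ᶠ t in l, t ∉ frontier T) :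
    EventuallyConst T l := by
  obtain ⟨i, hi, hiT⟩ := hl.eventually_iff.1 hT
  have hmem := hl.mem_of_mem hi
  exact eventuallyConst_set.2
    ((subset_or_subset_compl_of_disjoint_frontier (hs i hi) (disjoint_left.2 @hiT)).imp
      (mem_of_superset hmem) (mem_of_superset hmem))

lemma eventually_notMem_frontier_of_finite {R : Set ℝ} (hR : (frontier R).Finite) (s : ℝ) :
    ∀ᶠ t in 𝓝[≠] s, t ∉ frontier R := by
  have hclosed : IsClosed (frontier R \ {s}) := (hR.subset sdiff_subset).isClosed
  filter_upwards [nhdsWithin_le_nhds (hclosed.isOpen_compl.mem_nhds (by simp)),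
    self_mem_nhdsWithin] with t ht hts htR
  exact ht ⟨htR, hts⟩

lemma eventuallyConst_nhdsLT_of_finite_frontier {R : Set ℝ} (hR : (frontier R).Finite) (s : ℝ) :
    EventuallyConst R (𝓝[<] s) :=
  eventuallyConst_set_of_hasBasis_isPreconnected (nhdsLT_basis s) (fun _ _ => isPreconnected_Ioo)
    ((eventually_notMem_frontier_of_finite hR s).filter_mono (nhdsLT_le_nhdsNE s))

lemma eventuallyConst_nhdsGT_of_finite_frontier {R : Set ℝ} (hR : (frontier R).Finite) (s : ℝ) :
    EventuallyConst R (𝓝[>] s) :=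
  eventuallyConst_set_of_hasBasis_isPreconnected (nhdsGT_basis s) (fun _ _ => isPreconnected_Ioo)
    ((eventually_notMem_frontier_of_finite hR s).filter_mono (nhdsGT_le_nhdsNE s))

end Germs

section RadialDensity

variable {E : Type*} [NormedAddCommGroup E] [InnerProductSpace ℝ E] [FiniteDimensional ℝ E]
  [MeasurableSpace E] [BorelSpace E] (μ : Measure E) [μ.IsAddHaarMeasure]

lemma hasDensity_norm_preimage_Iio {x : E} (hx : x ≠ 0) :
    HasDensity μ (norm ⁻¹' Iio ‖x‖) x (1 / 2) := by
  have hφ : 2 • innerSL ℝ x ≠ 0 := fun h => hx (by simpa using DFunLike.congr_fun h x)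
  convert hasDensity_setOf_lt_of_hasFDerivAt μ (measurable_norm.pow_const 2)
    (hasStrictFDerivAt_norm_sq x).hasFDerivAt hφ using 1
  ext y
  exact (pow_lt_pow_iff_left₀ (norm_nonneg y) (norm_nonneg x) two_ne_zero).symm

variable [Nontrivial E]

lemma tendsto_norm_ae_inf_nhds (x : E) : Tendsto norm (ae μ ⊓ 𝓝 x) (𝓝[≠] ‖x‖) := by
  refine tendsto_inf.2 ⟨continuous_norm.continuousAt.mono_left inf_le_right, ?_⟩
  refine tendsto_principal.2 (Eventually.filter_mono inf_le_left ?_)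
  filter_upwards [measure_eq_zero_iff_ae_notMem.1 (Measure.addHaar_sphere μ 0 ‖x‖)] with y hy
  simpa using hy

lemma norm_preimage_eventuallyEq {R R' : Set ℝ} {x : E} (hlt : R =ᶠ[𝓝[<] ‖x‖] R')
    (hgt : R =ᶠ[𝓝[>] ‖x‖] R') : norm ⁻¹' R =ᶠ[ae μ ⊓ 𝓝 x] norm ⁻¹' R' := by
  have hne : R =ᶠ[𝓝[≠] ‖x‖] R' := by
    rw [← nhdsLT_sup_nhdsGT]
    exact eventually_sup.2 ⟨hlt, hgt⟩
  exact (tendsto_norm_ae_inf_nhds μ x).eventually hne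

lemma hasDensity_norm_preimage_Ioi {x : E} (hx : x ≠ 0) :
    HasDensity μ (norm ⁻¹' Ioi ‖x‖) x (1 / 2) := by
  have hIci : HasDensity μ (norm ⁻¹' Ici ‖x‖) x (1 / 2) := by
    convert (hasDensity_norm_preimage_Iio μ hx).compl (measurable_norm measurableSet_Iio) using 1
    · simp [← preimage_compl]
    · norm_num
  have hne : Ici ‖x‖ =ᶠ[𝓝[≠] ‖x‖] Ioi ‖x‖ := by
    filter_upwards [self_mem_nhdsWithin] with t ht
    exact propext (Ne.symm ht).le_iff_lt
  exact hIci.congr ((tendsto_norm_ae_inf_nhds μ x).eventually hne)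

lemma exists_hasDensity_norm_preimage {R : Set ℝ} (hR : (frontier R).Finite) {x : E}
    (hx : x ≠ 0) : ∃ v ∈ ({0, 1 / 2, 1} : Set ℝ), HasDensity μ (norm ⁻¹' R) x v := by
  have hlt := eventuallyConst_set'.1 (eventuallyConst_nhdsLT_of_finite_frontier hR ‖x‖)
  have hgt := eventuallyConst_set'.1 (eventuallyConst_nhdsGT_of_finite_frontier hR ‖x‖)
  have hIio_lt : Iio ‖x‖ =ᶠ[𝓝[<] ‖x‖] (univ : Set ℝ) := eventuallyEq_univ.2 self_mem_nhdsWithin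
  have hIio_gt : Iio ‖x‖ =ᶠ[𝓝[>] ‖x‖] (∅ : Set ℝ) :=
    eventuallyEq_empty.2 (mem_of_superset self_mem_nhdsWithin fun t ht => (mem_Ioi.1 ht).not_gt)
  have hIoi_lt : Ioi ‖x‖ =ᶠ[𝓝[<] ‖x‖] (∅ : Set ℝ) :=
    eventuallyEq_empty.2 (mem_of_superset self_mem_nhdsWithin fun t ht => (mem_Iio.1 ht).not_gt)
  have hIoi_gt : Ioi ‖x‖ =ᶠ[𝓝[>] ‖x‖] (univ : Set ℝ) := eventuallyEq_univ.2 self_mem_nhdsWithin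
  rcases hlt with hlt | hlt <;> rcases hgt with hgt | hgt
  · exact ⟨0, by simp, hasDensity_empty.congr (norm_preimage_eventuallyEq μ hlt hgt).symm⟩
  · exact ⟨1 / 2, by simp, (hasDensity_norm_preimage_Ioi μ hx).congr
      (norm_preimage_eventuallyEq μ (hlt.trans hIoi_lt.symm) (hgt.trans hIoi_gt.symm)).symm⟩
  · exact ⟨1 / 2, by simp, (hasDensity_norm_preimage_Iio μ hx).congr
      (norm_preimage_eventuallyEq μ (hlt.trans hIio_lt.symm) (hgt.trans hIio_gt.symm)).symm⟩
  · exact ⟨1, by simp, hasDensity_univ.congr (norm_preimage_eventuallyEq μ hlt hgt).symm⟩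

end RadialDensity

section Equidistribution

lemma tendsto_integral_abs_translate_sub {G ι : Type*} [AddGroup G] [TopologicalSpace G]
    [IsTopologicalAddGroup G] [MeasurableSpace G] [BorelSpace G] {μ : Measure G}
    [μ.IsAddLeftInvariant] [IsLocallyFiniteMeasure μ] [μ.InnerRegularCompactLTTop]
    {g : G → ℝ} (hg : Integrable g μ) {l : Filter ι} {a : ι → G} (ha : Tendsto a l (𝓝 0)) :
    Tendsto (fun i => ∫ t, |g (a i + t) - g t| ∂μ) l (𝓝 0) := by
  have : Fact ((1 : ENNReal) ≠ ⊤) := ⟨ENNReal.one_ne_top⟩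
  have hmem : MemLp g 1 μ := memLp_one_iff_integrable.2 hg
  have hmk : Tendsto (fun i => DomAddAct.mk (a i)) l (𝓝 0) :=
    (DomAddAct.continuous_mk.tendsto 0).comp ha
  have hnorm := ((hmk.vadd_const (hmem.toLp g)).sub_const (hmem.toLp g)).norm
  rw [zero_vadd, sub_self, norm_zero] at hnorm
  refine hnorm.congr fun i => ?_
  rw [DomAddAct.mk_vadd_toLp, ← MemLp.toLp_sub, L1.norm_eq_integral_norm]
  refine integral_congr_ae ?_
  filter_upwards [((hmem.comp_measurePreserving
    (measurePreserving_vadd (a i) μ)).sub hmem).coeFn_toLp] with t ht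
  exact congrArg norm ht

lemma tendsto_measureReal_preimage_add_sub {G ι : Type*} [AddGroup G] [TopologicalSpace G]
    [IsTopologicalAddGroup G] [MeasurableSpace G] [BorelSpace G] {μ ν : Measure G}
    [μ.IsAddLeftInvariant] [IsLocallyFiniteMeasure μ] [μ.InnerRegularCompactLTTop] [SigmaFinite μ]
    [IsFiniteMeasure ν] (hν : ν ≪ μ) {l : Filter ι} {a : ι → G} (ha : Tendsto a l (𝓝 0))
    (T : ι → Set G) :
    Tendsto (fun i => ν.real ((a i + ·) ⁻¹' T i) - ν.real (T i)) l (𝓝 0) := by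
  set g : G → ℝ := fun t => (ν.rnDeriv μ t).toReal
  have hg : Integrable g μ := Measure.integrable_toReal_rnDeriv
  have hneg : Tendsto (fun i => -a i) l (𝓝 0) := neg_zero (G := G) ▸ ha.neg
  refine squeeze_zero_norm (fun i => ?_) (tendsto_integral_abs_translate_sub hg hneg)
  have hga : Integrable (fun t => g (-a i + t)) μ := hg.comp_add_left (-a i)
  have hreal : ν.real ((a i + ·) ⁻¹' T i) = ∫ t in T i, g (-a i + t) ∂μ := by
    rw [← (measurePreserving_add_left μ (a i)).setIntegral_preimage_emb
      (measurableEmbedding_addLeft (a i)), ← Measure.setIntegral_toReal_rnDeriv hν]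
    simp only [neg_add_cancel_left, g]
  rw [hreal, ← Measure.setIntegral_toReal_rnDeriv hν, ← integral_sub hga.integrableOn
    hg.integrableOn]
  exact (norm_integral_le_integral_norm _).trans
    (setIntegral_le_integral (hga.sub hg).norm (ae_of_all _ fun _ => norm_nonneg _))

/-- The union of the cells `[k / N, (k + 1) / N)` with `k` in the residue class `r` modulo `m`.
For large `N` the `m` classes share every absolutely continuous finite measure equally. -/
def floorResidue (m : ℕ) (N : ℝ) (r : ZMod m) : Set ℝ :=
  (fun t => (⌊N * t⌋ : ZMod m)) ⁻¹' {r}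

lemma measurableSet_floorResidue (m : ℕ) (N : ℝ) (r : ZMod m) :
    MeasurableSet (floorResidue m N r) :=
  (Int.measurable_floor.comp (measurable_const_mul N))
    (MeasurableSet.of_discrete (s := {k : ℤ | (k : ZMod m) = r}))

lemma preimage_add_floorResidue {m : ℕ} {N : ℝ} (hN : N ≠ 0) (r : ZMod m) (k : ℤ) :
    (k / N + ·) ⁻¹' floorResidue m N (r + k) = floorResidue m N r := by
  ext t
  simp [floorResidue, mul_add, mul_div_cancel₀ _ hN, add_comm r]

lemma sum_measureReal_floorResidue {ν : Measure ℝ} [IsFiniteMeasure ν] (m : ℕ) [NeZero m] (N : ℝ) :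
    ∑ r, ν.real (floorResidue m N r) = ν.real univ :=
  (sum_measureReal_preimage_singleton Finset.univ
    fun r _ => measurableSet_floorResidue m N r).trans (by simp)

lemma tendsto_measureReal_floorResidue {ν : Measure ℝ} [IsFiniteMeasure ν] (hν : ν ≪ volume)
    (m : ℕ) [NeZero m] (r : ZMod m) :
    Tendsto (fun N => ν.real (floorResidue m N r)) atTop (𝓝 (ν.real univ / m)) := by
  have hdiff (s : ZMod m) : Tendsto
      (fun N => ν.real (floorResidue m N s) - ν.real (floorResidue m N r)) atTop (𝓝 0) := by
    obtain ⟨k, rfl⟩ : ∃ k : ℤ, r = s + k := ⟨(r - s).cast, by simp⟩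
    have hshift : Tendsto (fun N : ℝ => k / N) atTop (𝓝 0) :=
      tendsto_const_nhds.div_atTop tendsto_id
    refine (tendsto_measureReal_preimage_add_sub hν hshift
      (fun N => floorResidue m N (s + k))).congr' ?_
    filter_upwards [eventually_ne_atTop 0] with N hN
    rw [preimage_add_floorResidue hN]
  have hsum := tendsto_finsetSum Finset.univ fun s _ => hdiff s
  simp only [Finset.sum_sub_distrib, sum_measureReal_floorResidue, Finset.sum_const,
    Finset.card_univ, ZMod.card, nsmul_eq_mul, mul_zero] at hsum
  have hm : (m : ℝ) ≠ 0 := NeZero.ne _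
  have hlim := (hsum.const_sub (ν.real univ)).div_const (m : ℝ)
  simp only [sub_sub_cancel, mul_div_cancel_left₀ _ hm, sub_zero] at hlim
  exact hlim

end Equidistribution

section Stripes

lemma finite_frontier_union {X : Type*} [TopologicalSpace X] {S T : Set X}
    (hS : (frontier S).Finite) (hT : (frontier T).Finite) : (frontier (S ∪ T)).Finite :=
  (hS.union hT).subset ((frontier_union_subset S T).trans
    (union_subset_union inter_subset_left inter_subset_right))

lemma finite_frontier_inter {X : Type*} [TopologicalSpace X] {S T : Set X}
    (hS : (frontier S).Finite) (hT : (frontier T).Finite) : (frontier (S ∩ T)).Finite :=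
  (hS.union hT).subset ((frontier_inter_subset S T).trans
    (union_subset_union inter_subset_left inter_subset_right))

lemma finite_frontier_biUnion {X ι : Type*} [TopologicalSpace X] {I : Set ι} (hI : I.Finite)
    {s : ι → Set X} (hs : ∀ i ∈ I, (frontier (s i)).Finite) :
    (frontier (⋃ i ∈ I, s i)).Finite := by
  induction I, hI using Set.Finite.induction_on with
  | empty => simp
  | insert _ _ ih =>
    rw [biUnion_insert]
    exact finite_frontier_union (hs _ (mem_insert _ _))
      (ih fun i hi => hs i (mem_insert_of_mem _ hi))

lemma finite_frontier_Ioo (a b : ℝ) : (frontier (Ioo a b)).Finite := by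
  rcases lt_or_ge a b with hab | hab
  · rw [frontier_Ioo hab]
    exact toFinite _
  · simp [Ioo_eq_empty hab.not_gt]

/-- The middle third of each of the intervals `[k / N, (k + 1) / N]` that make up `[0, 2]`. The
point `1` is an endpoint of these intervals, so that the stripes stay away from it. -/
def stripes (N : ℕ) : Set ℝ :=
  ⋃ k ∈ Iio (2 * N), Ioo ((3 * k + 1) / (3 * N) : ℝ) ((3 * k + 2) / (3 * N))

lemma isOpen_stripes (N : ℕ) : IsOpen (stripes N) :=
  isOpen_biUnion fun _ _ => isOpen_Ioo

lemma finite_frontier_stripes (N : ℕ) : (frontier (stripes N)).Finite :=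
  finite_frontier_biUnion (finite_Iio _) fun _ _ => finite_frontier_Ioo _ _

lemma one_notMem_closure_stripes (N : ℕ) : 1 ∉ closure (stripes N) := by
  intro h
  have hsub : closure (stripes N) ⊆
      ⋃ k ∈ Iio (2 * N), Icc ((3 * k + 1) / (3 * N) : ℝ) ((3 * k + 2) / (3 * N)) :=
    closure_minimal (iUnion₂_mono fun _ _ => Ioo_subset_Icc_self)
      ((finite_Iio _).isClosed_biUnion fun _ _ => isClosed_Icc)
  obtain ⟨k, hk, hlow, hup⟩ := mem_iUnion₂.1 (hsub h)
  have hN : 0 < 3 * (N : ℝ) := by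
    have : 0 < N := by have := mem_Iio.1 hk; omega
    positivity
  rw [div_le_one hN] at hlow
  rw [one_le_div hN] at hup
  norm_cast at hlow hup
  omega

lemma stripes_subset_floorResidue {N : ℕ} (hN : N ≠ 0) :
    stripes N ⊆ floorResidue 3 (3 * N) 1 := by
  intro t ht
  obtain ⟨k, -, hlow, hup⟩ := mem_iUnion₂.1 ht
  have hN' : 0 < 3 * (N : ℝ) := by positivity
  rw [div_lt_iff₀' hN'] at hlow
  rw [lt_div_iff₀' hN'] at hup
  have hfloor : ⌊3 * N * t⌋ = 3 * k + 1 := by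
    rw [Int.floor_eq_iff]
    push_cast
    constructor <;> linarith
  have hthree : (3 : ZMod 3) = 0 := rfl
  simp [floorResidue, hfloor, hthree]

lemma mem_stripes_of_mem_floorResidue {N : ℕ} {t : ℝ} (ht : t ∈ Ioo (0 : ℝ) 2)
    (hint : ∀ k : ℤ, 3 * N * t ≠ k) (hres : t ∈ floorResidue 3 (3 * N) 1) : t ∈ stripes N := by
  have hN : N ≠ 0 := fun hN => hint 0 (by simp [hN])
  have hN' : 0 < 3 * (N : ℝ) := by positivity
  have hmem : ((⌊3 * N * t⌋ : ℤ) : ZMod 3) = (1 : ℤ) := by simpa [floorResidue] using hres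
  have hmod : ⌊3 * N * t⌋ % 3 = 1 := (ZMod.intCast_eq_intCast_iff' _ 1 3).1 hmem
  have hlow : 0 ≤ ⌊3 * N * t⌋ := Int.floor_nonneg.2 (mul_nonneg hN'.le ht.1.le)
  have hup : ⌊3 * N * t⌋ < 6 * N := by
    rw [Int.floor_lt]
    push_cast
    nlinarith [ht.2]
  obtain ⟨k, hk⟩ : ∃ k : ℕ, ⌊3 * N * t⌋ = 3 * k + 1 := ⟨(⌊3 * N * t⌋ / 3).toNat, by omega⟩
  have hk' : (⌊3 * N * t⌋ : ℝ) = 3 * k + 1 := mod_cast hk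
  refine mem_iUnion₂.2 ⟨k, mem_Iio.2 (by omega), ?_, ?_⟩
  · rw [div_lt_iff₀' hN', ← hk']
    exact (Int.floor_le _).lt_of_ne (hint _).symm
  · rw [lt_div_iff₀' hN']
    linarith [Int.lt_floor_add_one (3 * N * t)]

lemma floorResidue_ae_eq_stripes {N : ℕ} (hN : N ≠ 0) :
    ∀ᵐ t : ℝ, t ∈ Ioo (0 : ℝ) 2 → (t ∈ stripes N ↔ t ∈ floorResidue 3 (3 * N) 1) := by
  have hnull : ∀ᵐ t : ℝ, t ∉ range fun k : ℤ => k / (3 * N : ℝ) :=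
    measure_eq_zero_iff_ae_notMem.1 ((countable_range _).measure_zero _)
  filter_upwards [hnull] with t ht hmem
  refine ⟨fun h => stripes_subset_floorResidue hN h,
    mem_stripes_of_mem_floorResidue hmem fun k hk => ht ⟨k, ?_⟩⟩
  have hN' : (3 * N : ℝ) ≠ 0 := by positivity
  rw [div_eq_iff hN', ← hk, mul_comm]

lemma tendsto_measureReal_inter_stripes {ν : Measure ℝ} [IsFiniteMeasure ν] (hν : ν ≪ volume)
    {U : Set ℝ} (hU : U ⊆ Ioo 0 2) :
    Tendsto (fun N => ν.real (stripes N ∩ U)) atTop (𝓝 (ν.real U / 3)) := by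
  have : Tendsto (fun N : ℕ => (3 * N : ℝ)) atTop atTop :=
    tendsto_natCast_atTop_atTop.const_mul_atTop three_pos
  have h := (tendsto_measureReal_floorResidue (Measure.absolutelyContinuous_of_le
    (Measure.restrict_le_self (s := U)) |>.trans hν) 3 1).comp this
  simp only [measureReal_restrict_apply_univ, Function.comp_def, Nat.cast_ofNat] at h
  refine h.congr' ?_
  filter_upwards [eventually_ne_atTop 0] with N hN
  rw [measureReal_restrict_apply (measurableSet_floorResidue _ _ _)]
  refine measureReal_congr ?_
  filter_upwards [hν.ae_le (floorResidue_ae_eq_stripes hN)] with t ht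
  exact propext (and_congr_left fun htU => (ht (hU htU)).symm)

end Stripes

section Norm

variable {E : Type*} [NormedAddCommGroup E] [NormedSpace ℝ E] [FiniteDimensional ℝ E]
  [Nontrivial E] [MeasurableSpace E] [BorelSpace E] (μ : Measure E) [μ.IsAddHaarMeasure]

lemma quasiMeasurePreserving_norm : Measure.QuasiMeasurePreserving (norm : E → ℝ) μ volume := by
  refine ⟨measurable_norm, Measure.AbsolutelyContinuous.mk fun N hN hN0 => ?_⟩
  have hradius := (Measure.quasiMeasurePreserving_snd (μ := μ.toSphere)
    (ν := Measure.volumeIoiPow (Module.finrank ℝ E - 1))).comp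
    μ.measurePreserving_homeomorphUnitSphereProd.quasiMeasurePreserving
  have hnull : Measure.volumeIoiPow (Module.finrank ℝ E - 1) (Subtype.val ⁻¹' N) = 0 := by
    refine withDensity_absolutelyContinuous _ _ ?_
    rw [comap_subtype_coe_apply measurableSet_Ioi]
    exact measure_mono_null (image_preimage_subset _ _) hN0
  have hcomap := hradius.preimage_null hnull
  rw [comap_subtype_coe_apply (measurableSet_singleton _).compl] at hcomap
  rw [Measure.map_apply measurable_norm hN]
  refine measure_mono_null (fun y hy => ?_) (measure_union_null (measure_singleton 0) hcomap)
  refine or_iff_not_imp_left.2 fun hy0 => ⟨⟨y, hy0⟩, ?_, rfl⟩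
  simpa using hy

end Norm

lemma abs_measureReal_inter_sub_le {X : Type*} [MeasurableSpace X] {μ : Measure X} {A B C : Set X}
    (hB : μ B ≠ ⊤) (hC : μ C ≠ ⊤) : |μ.real (A ∩ B) - μ.real (A ∩ C)| ≤ μ.real (symmDiff B C) := by
  have key {B C : Set X} (hB : μ B ≠ ⊤) (hC : μ C ≠ ⊤) :
      μ.real (A ∩ B) - μ.real (A ∩ C) ≤ μ.real (symmDiff B C) :=
    (le_measureReal_sdiff (measure_ne_top_of_subset inter_subset_right hC)).trans
      (measureReal_mono (fun y hy => Or.inl ⟨hy.1.2, fun hyC => hy.2 ⟨hy.1.1, hyC⟩⟩)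
        (measure_ne_top_of_subset symmDiff_le_sup (measure_union_ne_top hB hC)))
  exact abs_sub_le_iff.2 ⟨key hB hC, symmDiff_comm B C ▸ key hC hB⟩

section Visits

variable {X ι : Type*} [MetricSpace X] [MeasurableSpace X] {μ : Measure X} {x : X} {e η v : ℝ}
  {A : Set X} {V : Set ℝ} {l : Filter ι} {S : ι → Set X} {c : ℝ}

/-- The points about which some ball of radius less than `η` is filled by `A` in a proportion that
belongs to `V`. -/
def visits (μ : Measure X) (A : Set X) (η : ℝ) (V : Set ℝ) : Set X :=
  {x | ∃ e ∈ Ioo 0 η, ballRatio μ A x e ∈ V}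

lemma visits_mono {η' : ℝ} {V' : Set ℝ} (hη : η ≤ η') (hV : V ⊆ V') :
    visits μ A η V ⊆ visits μ A η' V' :=
  fun _ ⟨e, he, h⟩ => ⟨e, ⟨he.1, he.2.trans_le hη⟩, hV h⟩

lemma mem_visits_of_tendsto (h : Tendsto (ballRatio μ A x) (𝓝[>] 0) (𝓝 v)) (hV : V ∈ 𝓝 v)
    (hη : 0 < η) : x ∈ visits μ A η V :=
  ((show ∀ᶠ e in 𝓝[>] (0 : ℝ), e ∈ Ioo 0 η from Ioo_mem_nhdsGT hη).and (h hV)).exists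

lemma HasDensity.mem_closure_of_mem_visits (hv : HasDensity μ A x v)
    (h : ∀ η > 0, x ∈ visits μ A η V) : v ∈ closure V := by
  refine mem_closure_of_frequently_of_tendsto ?_ hv
  refine (nhdsGT_basis 0).frequently_iff.2 fun η hη => ?_
  obtain ⟨e, he, hmem⟩ := h η hη
  exact ⟨e, he, hmem⟩

variable [ProperSpace X] [IsFiniteMeasureOnCompacts μ] [OpensMeasurableSpace X]

lemma tendsto_measureReal_symmDiff_ball (hx : μ (sphere x e) = 0) :
    Tendsto (fun y => μ.real (symmDiff (ball y e) (ball x e))) (𝓝 x) (𝓝 0) := by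
  suffices h : Tendsto (fun y => μ (symmDiff (ball y e) (ball x e))) (𝓝 x) (𝓝 (μ ∅)) by
    simpa [Function.comp_def, measureReal_def] using
      (ENNReal.tendsto_toReal (measure_empty (μ := μ) ▸ ENNReal.zero_ne_top)).comp h
  refine tendsto_measure_of_ae_tendsto_indicator _ MeasurableSet.empty
    (fun y => measurableSet_ball.symmDiff measurableSet_ball)
    (measurableSet_ball (x := x) (ε := e + 1)) measure_ball_lt_top.ne ?_ ?_
  · filter_upwards [ball_mem_nhds x one_pos] with y hy
    refine symmDiff_le_sup.trans (union_subset (ball_subset_ball' ?_) (ball_subset_ball ?_))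
    · exact add_le_add_right (mem_ball.1 hy).le e
    · linarith
  · filter_upwards [measure_eq_zero_iff_ae_notMem.1 hx] with z hz
    have hdist : Tendsto (fun y => dist z y) (𝓝 x) (𝓝 (dist z x)) :=
      tendsto_const_nhds.dist tendsto_id
    rcases (show dist z x ≠ e from hz).lt_or_gt with h | h
    · filter_upwards [hdist.eventually_lt_const h] with y hy
      simp [mem_symmDiff, h, hy]
    · filter_upwards [hdist.eventually_const_lt h] with y hy
      simp [mem_symmDiff, h.le, hy.le]

lemma tendsto_measureReal_inter_ball (hx : μ (sphere x e) = 0)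
    (h : Tendsto (fun i => μ.real (S i ∩ ball x e)) l (𝓝 c)) :
    Tendsto (fun p : ι × X => μ.real (S p.1 ∩ ball p.2 e)) (l ×ˢ 𝓝 x) (𝓝 c) := by
  have hdiff : Tendsto (fun p : ι × X => μ.real (S p.1 ∩ ball p.2 e) - μ.real (S p.1 ∩ ball x e))
      (l ×ˢ 𝓝 x) (𝓝 0) :=
    squeeze_zero_norm (fun _ => abs_measureReal_inter_sub_le measure_ball_lt_top.ne
      measure_ball_lt_top.ne) ((tendsto_measureReal_symmDiff_ball hx).comp tendsto_snd)
  simpa using hdiff.add (h.comp tendsto_fst)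

variable [μ.IsOpenPosMeasure]

lemma tendsto_ballRatio_prod (hx : μ (sphere x e) = 0) (he : 0 < e)
    (h : Tendsto (fun i => ballRatio μ (S i) x e) l (𝓝 c)) :
    Tendsto (fun p : ι × X => ballRatio μ (S p.1) p.2 e) (l ×ˢ 𝓝 x) (𝓝 c) := by
  have hpos := (measureReal_ball_pos μ x he).ne'
  have hnum : Tendsto (fun i => μ.real (S i ∩ ball x e)) l (𝓝 (c * μ.real (ball x e))) :=
    (h.mul_const _).congr fun i => div_mul_cancel₀ _ hpos
  have hden : Tendsto (fun p : ι × X => μ.real (univ ∩ ball p.2 e)) (l ×ˢ 𝓝 x)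
      (𝓝 (μ.real (ball x e))) :=
    tendsto_measureReal_inter_ball (S := fun _ => univ) hx (by simpa using tendsto_const_nhds)
  have hdiv := (tendsto_measureReal_inter_ball hx hnum).div hden hpos
  simp only [univ_inter, mul_div_cancel_right₀ _ hpos] at hdiv
  exact hdiv

lemma eventually_subset_visits {K : Set X} (hK : IsCompact K)
    (hsphere : ∀ x ∈ K, ∀ e, μ (sphere x e) = 0) (hV : IsOpen V)
    (h : ∀ x ∈ K, ∃ e ∈ Ioo 0 η, ∃ c ∈ V, Tendsto (fun i => ballRatio μ (S i) x e) l (𝓝 c)) :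
    ∀ᶠ i in l, K ⊆ visits μ (S i) η V := by
  have hprod : ∀ᶠ p : ι × X in l ×ˢ 𝓝ˢ K, p.2 ∈ visits μ (S p.1) η V := by
    refine hK.mem_prod_nhdsSet_of_forall fun x hx => ?_
    obtain ⟨e, he, c, hc, hlim⟩ := h x hx
    filter_upwards [tendsto_ballRatio_prod (hsphere x hx e) he.1 hlim (hV.mem_nhds hc)] with p hp
    exact ⟨e, he, hp⟩
  filter_upwards [hprod.curry] with i hi x hx
  exact hi.self_of_nhdsSet x hx

end Visits

section Enlargements

variable {X : Type*} [MeasurableSpace X] {μ : Measure X} {A B : Set X} {σ : ENNReal}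

/-- The sets that contain `A` and exceed it by a set of measure at most `σ`. -/
def enlargements (μ : Measure X) (A : Set X) (σ : ENNReal) : Set (Set X) :=
  {B | A ⊆ B ∧ μ (B \ A) ≤ σ}

/-- The filter of the sets that contain `A` and exceed it by a set of arbitrarily small measure. -/
def smallEnlargements (μ : Measure X) (A : Set X) : Filter (Set X) :=
  𝓟 {B | A ⊆ B} ⊓ comap (fun B => μ (B \ A)) (𝓝 0)

lemma smallEnlargements_hasBasis :
    (smallEnlargements μ A).HasBasis (0 < ·) (enlargements μ A) :=
  (ENNReal.nhds_zero_basis_Iic.comap _).principal_inf _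

lemma self_mem_enlargements : A ∈ enlargements μ A σ := by
  simp [enlargements]

lemma enlargements_subset_of_mem {σ' : ENNReal} (hB : B ∈ enlargements μ A σ) :
    enlargements μ B σ' ⊆ enlargements μ A (σ + σ') := by
  rintro D ⟨hBD, hD⟩
  refine ⟨hB.1.trans hBD, ?_⟩
  calc μ (D \ A) ≤ μ ((B \ A) ∪ (D \ B)) := measure_mono fun x hx => by
        by_cases h : x ∈ B
        · exact Or.inl ⟨h, hx.2⟩
        · exact Or.inr ⟨hx.1, h⟩
    _ ≤ σ + σ' := (measure_union_le _ _).trans (add_le_add hB.2 hD)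

lemma iUnion_mem_enlargements {S : ℕ → Set X} (hS : Monotone S)
    (h : ∀ m, S m ∈ enlargements μ A σ) : ⋃ m, S m ∈ enlargements μ A σ := by
  refine ⟨(h 0).1.trans (subset_iUnion S 0), ?_⟩
  rw [iUnion_sdiff, Monotone.measure_iUnion fun i j hij => sdiff_subset_sdiff_left (hS hij)]
  exact iSup_le fun m => (h m).2

lemma exists_enlargements_subset {C P : Set X → Prop}
    (h : ∃ᶠ B in smallEnlargements μ A, C B ∧ ∀ᶠ D in smallEnlargements μ B, P D) (hσ : 0 < σ) :
    ∃ B, C B ∧ ∃ σ' > 0, enlargements μ B σ' ⊆ enlargements μ A σ ∩ {D | P D} := by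
  obtain ⟨B, hB, hCB, hPB⟩ :=
    smallEnlargements_hasBasis.frequently_iff.1 h (σ / 2) (ENNReal.half_pos hσ.ne')
  obtain ⟨ρ, hρ, hρP⟩ := smallEnlargements_hasBasis.eventually_iff.1 hPB
  refine ⟨B, hCB, min ρ (σ / 2), lt_min hρ (ENNReal.half_pos hσ.ne'), subset_inter ?_ ?_⟩
  · refine fun D hD => ENNReal.add_halves σ ▸ enlargements_subset_of_mem hB ⟨hD.1, ?_⟩
    exact hD.2.trans (min_le_right _ _)
  · exact fun D hD => hρP ⟨hD.1, hD.2.trans (min_le_left _ _)⟩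

lemma exists_monotone_forall_iUnion {C : Set X → Prop} {P : ℕ → Set X → Prop} (hC : ∃ A, C A)
    (h : ∀ k A, C A →
      ∃ᶠ B in smallEnlargements μ A, C B ∧ ∀ᶠ D in smallEnlargements μ B, P k D) :
    ∃ S : ℕ → Set X, Monotone S ∧ (∀ m, C (S m)) ∧ ∀ k, P k (⋃ m, S m) := by
  obtain ⟨A₀, hA₀⟩ := hC
  have hstep (k : ℕ) (p : {p : Set X × ENNReal // C p.1 ∧ 0 < p.2}) :
      ∃ q : {p : Set X × ENNReal // C p.1 ∧ 0 < p.2},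
        enlargements μ q.1.1 q.1.2 ⊆ enlargements μ p.1.1 p.1.2 ∩ {D | P k D} := by
    obtain ⟨B, hB, σ, hσ, hsub⟩ := exists_enlargements_subset (h k p.1.1 p.2.1) p.2.2
    exact ⟨⟨(B, σ), hB, hσ⟩, hsub⟩
  choose next hnext using hstep
  let s : ℕ → {p : Set X × ENNReal // C p.1 ∧ 0 < p.2} := Nat.rec ⟨(A₀, 1), hA₀, one_pos⟩ next
  have hanti : Antitone fun m => enlargements μ (s m).1.1 (s m).1.2 :=
    antitone_nat_of_succ_le fun m => (hnext m (s m)).trans inter_subset_left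
  have hmem {i j : ℕ} (hij : i ≤ j) : (s j).1.1 ∈ enlargements μ (s i).1.1 (s i).1.2 :=
    hanti hij self_mem_enlargements
  have hmono : Monotone fun m => (s m).1.1 := fun i j hij => (hmem hij).1
  refine ⟨fun m => (s m).1.1, hmono, fun m => (s m).2.1, fun k => ?_⟩
  have hunion : ⋃ m, (s m).1.1 ∈ enlargements μ (s (k + 1)).1.1 (s (k + 1)).1.2 := by
    rw [← hmono.iUnion_nat_add (k + 1)]
    exact iUnion_mem_enlargements (fun i j hij => hmono (Nat.add_le_add_right hij (k + 1)))
      fun m => hmem (Nat.le_add_left (k + 1) m)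
  exact (hnext k (s k) hunion).2

end Enlargements

section Stability

variable {X : Type*} [MetricSpace X] [MeasurableSpace X] {μ : Measure X} {A : Set X}
  [ProperSpace X] [IsFiniteMeasureOnCompacts μ]

lemma tendsto_ballRatio_smallEnlargements (A : Set X) (x : X) (e : ℝ) :
    Tendsto (fun B => ballRatio μ B x e) (smallEnlargements μ A) (𝓝 (ballRatio μ A x e)) := by
  have hsmall : Tendsto (fun B => μ (B \ A)) (smallEnlargements μ A) (𝓝 0) :=
    tendsto_comap.mono_left inf_le_right
  have hfin (B : Set X) : μ (B ∩ ball x e) ≠ ⊤ :=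
    measure_ne_top_of_subset inter_subset_right measure_ball_lt_top.ne
  have hdiff : Tendsto (fun B => μ.real (B ∩ ball x e) - μ.real (A ∩ ball x e))
      (smallEnlargements μ A) (𝓝 0) := by
    refine squeeze_zero' ?_ ?_ ((ENNReal.tendsto_toReal ENNReal.zero_ne_top).comp hsmall)
    · filter_upwards [mem_inf_of_left (mem_principal_self _)] with B hB
      exact sub_nonneg.2 (measureReal_mono (inter_subset_inter_left _ hB) (hfin B))
    · filter_upwards [hsmall.eventually_lt_const ENNReal.zero_lt_top] with B hB
      refine (le_measureReal_sdiff (hfin A)).trans (measureReal_mono ?_ hB.ne)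
      exact fun y hy => ⟨hy.1.1, fun hyA => hy.2 ⟨hyA, hy.1.2⟩⟩
  simpa [ballRatio] using (hdiff.add_const (μ.real (A ∩ ball x e))).div_const (μ.real (ball x e))

lemma eventually_smallEnlargements_subset_visits [OpensMeasurableSpace X] [μ.IsOpenPosMeasure]
    {K : Set X} {η : ℝ} {V : Set ℝ} (hK : IsCompact K)
    (hsphere : ∀ x ∈ K, ∀ e, μ (sphere x e) = 0) (hV : IsOpen V) (h : K ⊆ visits μ A η V) :
    ∀ᶠ B in smallEnlargements μ A, K ⊆ visits μ B η V :=
  eventually_subset_visits hK hsphere hV fun x hx =>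
    let ⟨e, he, hmem⟩ := h hx
    ⟨e, he, _, hmem, tendsto_ballRatio_smallEnlargements A x e⟩

end Stability

section Profile

lemma exists_collar {ν : Measure ℝ} [ν.OuterRegular] {F W : Set ℝ} (hF : F.Finite) (hνF : ν F = 0)
    (hW : IsOpen W) (hFW : F ⊆ W) {σ : ENNReal} (hσ : 0 < σ) :
    ∃ U, IsOpen U ∧ (frontier U).Finite ∧ F ⊆ U ∧ closure U ⊆ W ∧ ν U ≤ σ := by
  obtain ⟨O, hFO, hO, hνO⟩ := F.exists_isOpen_lt_of_lt σ (hνF ▸ hσ)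
  obtain ⟨δ, hδ, hsub⟩ :=
    hF.isCompact.exists_cthickening_subset_open (hO.inter hW) (subset_inter hFO hFW)
  refine ⟨thickening δ F, isOpen_thickening, ?_, self_subset_thickening hδ F,
    (closure_thickening_subset_cthickening δ F).trans (hsub.trans inter_subset_right), ?_⟩
  · simp only [thickening_eq_biUnion_ball, Real.ball_eq_Ioo]
    exact finite_frontier_biUnion hF fun _ _ => finite_frontier_Ioo _ _
  · exact (measure_mono ((thickening_subset_cthickening δ F).trans
      (hsub.trans inter_subset_left))).trans hνO.le

/-- The sets of radii from which the construction is assembled: the open sets with finitely many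
boundary points that enlarge `R₀` inside `(1/2, 2)` without changing it near the radius `1`. -/
structure IsProfile (R₀ R : Set ℝ) : Prop where
  isOpen : IsOpen R
  finite_frontier : (frontier R).Finite
  frontier_subset : frontier R ⊆ Ioo (1 / 2) 2
  base_subset : R₀ ⊆ R
  subset_base_union : R ⊆ R₀ ∪ Ioo (1 / 2) 2
  eventuallyEq_base : R =ᶠ[𝓝 1] R₀

lemma isProfile_self {R₀ : Set ℝ} (ho : IsOpen R₀) (hfr : frontier R₀ = {1}) :
    IsProfile R₀ R₀ where
  isOpen := ho
  finite_frontier := hfr ▸ finite_singleton 1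
  frontier_subset := by norm_num [hfr]
  base_subset := subset_rfl
  subset_base_union := subset_union_left
  eventuallyEq_base := EventuallyEq.rfl

lemma IsProfile.union_stripes_inter {R₀ R U : Set ℝ} (hR : IsProfile R₀ R) (hU : IsOpen U)
    (hUfr : (frontier U).Finite) (hUc : closure U ⊆ Ioo (1 / 2) 2) (N : ℕ) :
    IsProfile R₀ (R ∪ stripes N ∩ U) where
  isOpen := hR.isOpen.union ((isOpen_stripes N).inter hU)
  finite_frontier := finite_frontier_union hR.finite_frontier
    (finite_frontier_inter (finite_frontier_stripes N) hUfr)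
  frontier_subset := (frontier_union_subset _ _).trans (union_subset
    (inter_subset_left.trans hR.frontier_subset) (inter_subset_right.trans
      (frontier_subset_closure.trans ((closure_mono inter_subset_right).trans hUc))))
  base_subset := hR.base_subset.trans subset_union_left
  subset_base_union := union_subset hR.subset_base_union
    (inter_subset_right.trans (subset_closure.trans (hUc.trans subset_union_right)))
  eventuallyEq_base := by
    have hstripes : (stripes N ∩ U : Set ℝ) =ᶠ[𝓝 1] (∅ : Set ℝ) := by
      filter_upwards [isClosed_closure.isOpen_compl.mem_nhds (one_notMem_closure_stripes N)]
        with t ht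
      exact eq_false fun h => ht (subset_closure h.1)
    simpa using hR.eventuallyEq_base.union hstripes

lemma IsProfile.hasDensity_half {E : Type*} [NormedAddCommGroup E] [MeasurableSpace E]
    {μ : Measure E} {R₀ R : Set ℝ} (hR : IsProfile R₀ R) {x : E} (hx : ‖x‖ = 1)
    (h : HasDensity μ (norm ⁻¹' R₀) x (1 / 2)) : HasDensity μ (norm ⁻¹' R) x (1 / 2) := by
  have hnorm : Tendsto norm (𝓝 x) (𝓝 1) := hx ▸ continuous_norm.continuousAt
  exact h.congr ((hnorm.eventually hR.eventuallyEq_base.symm).filter_mono inf_le_right)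

end Profile

section RadialSets

lemma measureReal_map_norm_restrict {E : Type*} [NormedAddCommGroup E] [MeasurableSpace E]
    [OpensMeasurableSpace E] (μ : Measure E) (B : Set E) {R : Set ℝ} (hR : MeasurableSet R) :
    ((μ.restrict B).map norm).real R = μ.real (norm ⁻¹' R ∩ B) := by
  rw [map_measureReal_apply measurable_norm hR, measureReal_restrict_apply (measurable_norm hR)]

variable {E : Type*} [NormedAddCommGroup E] [InnerProductSpace ℝ E] [FiniteDimensional ℝ E]
  [Nontrivial E] [MeasurableSpace E] [BorelSpace E] (μ : Measure E) [μ.IsAddHaarMeasure]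

lemma map_norm_restrict_absolutelyContinuous (B : Set E) :
    (μ.restrict B).map norm ≪ (volume : Measure ℝ) :=
  (Measure.restrict_le_self.absolutelyContinuous.map measurable_norm).trans
    (quasiMeasurePreserving_norm μ).absolutelyContinuous

lemma tendsto_ballRatio_union_stripes_inter {R U : Set ℝ} (hR : MeasurableSet R)
    (hU : MeasurableSet U) (hU2 : U ⊆ Ioo 0 2) (x : E) (e : ℝ) :
    Tendsto (fun N => ballRatio μ (norm ⁻¹' (R ∪ stripes N ∩ U)) x e) atTop
      (𝓝 (2 / 3 * ballRatio μ (norm ⁻¹' R) x e + 1 / 3 * ballRatio μ (norm ⁻¹' (R ∪ U)) x e)) := by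
  have : IsFiniteMeasure (μ.restrict (ball x e)) := ⟨by simp [measure_ball_lt_top]⟩
  set ν := (μ.restrict (ball x e)).map norm
  have hratio {T : Set ℝ} (hT : MeasurableSet T) :
      ballRatio μ (norm ⁻¹' T) x e = ν.real T / μ.real (ball x e) := by
    rw [ballRatio, measureReal_map_norm_restrict μ _ hT]
  have hadd {T : Set ℝ} (hT : MeasurableSet T) :
      ν.real (R ∪ T) = ν.real R + ν.real (T \ R) := by
    rw [← union_sdiff_self, measureReal_union disjoint_sdiff_right (hT.diff hR)]
  have hstripes (N : ℕ) : MeasurableSet (stripes N ∩ U) := (isOpen_stripes N).measurableSet.inter hU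
  have hlim := tendsto_measureReal_inter_stripes
    (map_norm_restrict_absolutelyContinuous μ (ball x e))
    (sdiff_subset.trans hU2 : U \ R ⊆ Ioo 0 2)
  simp only [hratio (hR.union (hstripes _)), hratio (hR.union hU), hratio hR, hadd (hstripes _),
    hadd hU, inter_sdiff_assoc]
  convert (hlim.const_add (ν.real R)).div_const (μ.real (ball x e)) using 2
  ring

lemma exists_tendsto_collar_average {R U : Set ℝ} (hU : IsOpen U)
    (hRfr : (frontier R).Finite) (hUfr : (frontier U).Finite) (hRU : frontier R ⊆ U) {x : E}
    (hx : x ≠ 0) :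
    ∃ w ∉ closedBall (1 / 2 : ℝ) (1 / 8), Tendsto (fun e => 2 / 3 * ballRatio μ (norm ⁻¹' R) x e +
        1 / 3 * ballRatio μ (norm ⁻¹' (R ∪ U)) x e) (𝓝[>] 0) (𝓝 w) := by
  have hone {T : Set ℝ} (hT : T ∈ 𝓝 ‖x‖) : HasDensity μ (norm ⁻¹' T) x 1 :=
    hasDensity_one_of_mem_nhds (continuous_norm.continuousAt hT)
  have hmean {v v' : ℝ} (hv : HasDensity μ (norm ⁻¹' R) x v)
      (hv' : HasDensity μ (norm ⁻¹' (R ∪ U)) x v') :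
      Tendsto (fun e => 2 / 3 * ballRatio μ (norm ⁻¹' R) x e +
        1 / 3 * ballRatio μ (norm ⁻¹' (R ∪ U)) x e) (𝓝[>] 0) (𝓝 (2 / 3 * v + 1 / 3 * v')) :=
    (hv.const_mul _).add (hv'.const_mul _)
  obtain ⟨v, hv, hRv⟩ := exists_hasDensity_norm_preimage μ hRfr hx
  obtain ⟨v', hv', hRUv⟩ :=
    exists_hasDensity_norm_preimage μ (finite_frontier_union hRfr hUfr) hx
  by_cases hfr : ‖x‖ ∈ frontier R
  · have hRU1 := hone (T := R ∪ U) (mem_of_superset (hU.mem_nhds (hRU hfr)) subset_union_right)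
    refine ⟨_, ?_, hmean hRv hRU1⟩
    rcases hv with rfl | rfl | rfl <;> norm_num [Real.closedBall_eq_Icc]
  · rcases mem_nhds_or_compl_mem_nhds_of_notMem_frontier hfr with hmem | hmem
    · refine ⟨_, ?_, hmean (hone hmem) (hone (mem_of_superset hmem subset_union_left))⟩
      norm_num [Real.closedBall_eq_Icc]
    · have hR0 : HasDensity μ (norm ⁻¹' R) x 0 :=
        hasDensity_zero_of_compl_mem_nhds (continuous_norm.continuousAt hmem)
      refine ⟨_, ?_, hmean hR0 hRUv⟩
      rcases hv' with rfl | rfl | rfl <;> norm_num [Real.closedBall_eq_Icc]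

lemma IsProfile.subset_visits {R₀ R : Set ℝ} (hR : IsProfile R₀ R) {K : Set E} (hK : 0 ∉ K) {η : ℝ}
    (hη : 0 < η) : K ⊆ visits μ (norm ⁻¹' R) η (thickening η {0, 1 / 2, 1}) := by
  intro x hx
  obtain ⟨v, hv, hRv⟩ :=
    exists_hasDensity_norm_preimage μ hR.finite_frontier (ne_of_mem_of_not_mem hx hK)
  exact mem_visits_of_tendsto hRv (isOpen_thickening.mem_nhds (self_subset_thickening hη _ hv)) hη

lemma IsProfile.exists_enlargement_subset_visits {R₀ R : Set ℝ} (hR : IsProfile R₀ R) {K : Set E}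
    (hKc : IsCompact K) (hK : 0 ∉ K) {η : ℝ} (hη : 0 < η) {σ : ENNReal} (hσ : 0 < σ) :
    ∃ R', IsProfile R₀ R' ∧ norm ⁻¹' R' ∈ enlargements μ (norm ⁻¹' R) σ ∧
      K ⊆ visits μ (norm ⁻¹' R') η (closedBall (1 / 2) (1 / 8))ᶜ := by
  set ν := (μ.restrict (ball 0 2)).map norm
  have : IsFiniteMeasure (μ.restrict (ball (0 : E) 2)) := ⟨by simp [measure_ball_lt_top]⟩
  obtain ⟨U, hU, hUfr, hRU, hUc, hUσ⟩ := exists_collar (ν := ν) hR.finite_frontier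
    (map_norm_restrict_absolutelyContinuous μ _ (hR.finite_frontier.measure_zero _)) isOpen_Ioo
    hR.frontier_subset hσ
  have hU2 : U ⊆ Ioo 0 2 :=
    subset_closure.trans (hUc.trans (Ioo_subset_Ioo_left one_half_pos.le))
  have hvisits : ∀ᶠ N in atTop,
      K ⊆ visits μ (norm ⁻¹' (R ∪ stripes N ∩ U)) η (closedBall (1 / 2) (1 / 8))ᶜ := by
    refine eventually_subset_visits hKc (fun x _ e => Measure.addHaar_sphere μ x e)
      isClosed_closedBall.isOpen_compl fun x hx => ?_
    obtain ⟨w, hw, hlim⟩ := exists_tendsto_collar_average μ hU hR.finite_frontier hUfr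
      hRU (ne_of_mem_of_not_mem hx hK)
    obtain ⟨e, he, hmem⟩ := ((show ∀ᶠ e in 𝓝[>] (0 : ℝ), e ∈ Ioo 0 η from Ioo_mem_nhdsGT hη).and
      (hlim (isClosed_closedBall.isOpen_compl.mem_nhds hw))).exists
    exact ⟨e, he, _, hmem, tendsto_ballRatio_union_stripes_inter μ hR.isOpen.measurableSet
      hU.measurableSet hU2 x e⟩
  obtain ⟨N, hN⟩ := hvisits.exists
  refine ⟨_, hR.union_stripes_inter hU hUfr hUc N, ⟨preimage_mono subset_union_left, ?_⟩, hN⟩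
  rw [Measure.map_apply measurable_norm hU.measurableSet,
    Measure.restrict_apply (measurable_norm hU.measurableSet)] at hUσ
  refine (measure_mono fun y hy => ?_).trans hUσ
  have hyU : ‖y‖ ∈ U := (hy.1.resolve_left hy.2).2
  exact ⟨hyU, mem_ball_zero_iff.2 (hU2 hyU).2⟩

end RadialSets

section Oscillation

variable {X : Type*} [MetricSpace X] [MeasurableSpace X] {μ : Measure X} {K A : Set X} {x x₀ : X}
  {η v : ℝ}

/-- The behaviour of `A` at scale `η` that leads to a sponge: about every point of `K` some ball
ratio keeps off `1 / 2` and another one is close to `0`, `1 / 2` or `1`, while about the point `x₀`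
some ball ratio is close to `1 / 2`. -/
structure OscillatesAtScale (μ : Measure X) (K : Set X) (x₀ : X) (η : ℝ) (A : Set X) : Prop where
  away : K ⊆ visits μ A η (closedBall (1 / 2) (1 / 8))ᶜ
  near : K ⊆ visits μ A η (thickening η {0, 1 / 2, 1})
  half : {x₀} ⊆ visits μ A η (ball (1 / 2) (1 / 8))

lemma OscillatesAtScale.mono {η' : ℝ} (h : OscillatesAtScale μ K x₀ η A) (hη : η ≤ η') :
    OscillatesAtScale μ K x₀ η' A where
  away := h.away.trans (visits_mono hη subset_rfl)
  near := h.near.trans (visits_mono hη (thickening_mono hη _))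
  half := h.half.trans (visits_mono hη subset_rfl)

lemma HasDensity.eq_zero_or_one_of_oscillatesAtScale (hv : HasDensity μ A x v)
    (hA : ∀ η > 0, OscillatesAtScale μ K x₀ η A) (hx : x ∈ K) : v = 0 ∨ v = 1 := by
  have haway : v ∈ closure (closedBall (1 / 2 : ℝ) (1 / 8))ᶜ :=
    hv.mem_closure_of_mem_visits fun η hη => (hA η hη).away hx
  have hne : v ≠ 1 / 2 := by
    rintro rfl
    rw [closure_compl, interior_closedBall _ (by norm_num)] at haway
    exact haway (mem_ball_self (by norm_num))
  have hnear : v ∈ closure ({0, 1 / 2, 1} : Set ℝ) := by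
    rw [closure_eq_iInter_cthickening]
    refine mem_iInter₂.2 fun r hr => closure_thickening_subset_cthickening r _ ?_
    refine hv.mem_closure_of_mem_visits fun η hη => ?_
    exact visits_mono (min_le_left η r) (thickening_mono (min_le_right η r) _)
      ((hA _ (lt_min hη hr)).near hx)
  rw [(toFinite _).isClosed.closure_eq] at hnear
  rcases hnear with h | h | h
  exacts [Or.inl h, (hne h).elim, Or.inr h]

lemma not_exists_hasDensity_of_oscillatesAtScale (hA : ∀ η > 0, OscillatesAtScale μ K x₀ η A)
    (hx₀ : x₀ ∈ K) : ¬ ∃ v, HasDensity μ A x₀ v := by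
  rintro ⟨v, hv⟩
  have hhalf : v ∈ closedBall (1 / 2 : ℝ) (1 / 8) := closure_ball_subset_closedBall
    (hv.mem_closure_of_mem_visits fun η hη => (hA η hη).half rfl)
  rw [Real.closedBall_eq_Icc] at hhalf
  rcases hv.eq_zero_or_one_of_oscillatesAtScale hA hx₀ with rfl | rfl <;> norm_num at hhalf

variable [ProperSpace X] [IsFiniteMeasureOnCompacts μ] [μ.IsOpenPosMeasure]

lemma OscillatesAtScale.eventually_smallEnlargements [OpensMeasurableSpace X]
    (h : OscillatesAtScale μ K x₀ η A) (hK : IsCompact K)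
    (hsphere : ∀ x e, μ (sphere x e) = 0) :
    ∀ᶠ B in smallEnlargements μ A, OscillatesAtScale μ K x₀ η B := by
  filter_upwards [
    eventually_smallEnlargements_subset_visits hK (fun x _ => hsphere x)
      isClosed_closedBall.isOpen_compl h.away,
    eventually_smallEnlargements_subset_visits hK (fun x _ => hsphere x) isOpen_thickening h.near,
    eventually_smallEnlargements_subset_visits isCompact_singleton (fun x _ => hsphere x)
      isOpen_ball h.half] with B haway hnear hhalf
  exact ⟨haway, hnear, hhalf⟩

lemma isSpongy_of_oscillatesAtScale (hA : ∀ η > 0, OscillatesAtScale μ K x₀ η A) (hx₀ : x₀ ∈ K)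
    (hfr : frontier A ⊆ K) : IsSpongy μ A := by
  refine ⟨fun x v hpos hlt hv => ?_, x₀, not_exists_hasDensity_of_oscillatesAtScale hA hx₀⟩
  have hv01 : v = 0 ∨ v = 1 := by
    by_cases hx : x ∈ K
    · exact hv.eq_zero_or_one_of_oscillatesAtScale hA hx
    · rcases mem_nhds_or_compl_mem_nhds_of_notMem_frontier (fun h => hx (hfr h)) with h | h
      · exact Or.inr (tendsto_nhds_unique hv (hasDensity_one_of_mem_nhds h))
      · exact Or.inl (tendsto_nhds_unique hv (hasDensity_zero_of_compl_mem_nhds h))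
  rcases hv01 with rfl | rfl
  exacts [hpos.false, hlt.false]

end Oscillation

section RadialSponges

variable {E : Type*} [NormedAddCommGroup E] [InnerProductSpace ℝ E] [FiniteDimensional ℝ E]
  [Nontrivial E] [MeasurableSpace E] [BorelSpace E] {μ : Measure E} [μ.IsAddHaarMeasure]
  {K : Set E} {x₀ : E} {R₀ : Set ℝ}

lemma IsProfile.frequently_oscillatesAtScale {R : Set ℝ} (hR : IsProfile R₀ R)
    (hKc : IsCompact K) (hK : 0 ∉ K) (hx₀ : ‖x₀‖ = 1)
    (hhalf : HasDensity μ (norm ⁻¹' R₀) x₀ (1 / 2)) {η : ℝ} (hη : 0 < η) :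
    ∃ᶠ B in smallEnlargements μ (norm ⁻¹' R), (∃ R', IsProfile R₀ R' ∧ norm ⁻¹' R' = B) ∧
      ∀ᶠ D in smallEnlargements μ B, OscillatesAtScale μ K x₀ η D := by
  refine smallEnlargements_hasBasis.frequently_iff.2 fun σ hσ => ?_
  obtain ⟨R', hR', hmem, haway⟩ := hR.exists_enlargement_subset_visits μ hKc hK hη hσ
  have hosc : OscillatesAtScale μ K x₀ η (norm ⁻¹' R') :=
    ⟨haway, hR'.subset_visits μ hK hη, singleton_subset_iff.2 (mem_visits_of_tendsto
      (hR'.hasDensity_half hx₀ hhalf) (ball_mem_nhds _ (by norm_num)) hη)⟩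
  exact ⟨norm ⁻¹' R', hmem, ⟨R', hR', rfl⟩,
    hosc.eventually_smallEnlargements hKc (Measure.addHaar_sphere μ)⟩

lemma exists_oscillatesAtScale_norm_preimage (ho : IsOpen R₀) (hfr : frontier R₀ = {1})
    (hKc : IsCompact K) (hK : 0 ∉ K) (hx₀ : ‖x₀‖ = 1)
    (hhalf : HasDensity μ (norm ⁻¹' R₀) x₀ (1 / 2)) :
    ∃ R, IsOpen R ∧ R₀ ⊆ R ∧ R ⊆ R₀ ∪ Ioo (1 / 2) 2 ∧
      ∀ η > 0, OscillatesAtScale μ K x₀ η (norm ⁻¹' R) := by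
  have hstep (k : ℕ) (A : Set E) : (∃ R, IsProfile R₀ R ∧ norm ⁻¹' R = A) →
      ∃ᶠ B in smallEnlargements μ A, (∃ R, IsProfile R₀ R ∧ norm ⁻¹' R = B) ∧
        ∀ᶠ D in smallEnlargements μ B, OscillatesAtScale μ K x₀ (1 / (k + 1)) D := by
    rintro ⟨R, hR, rfl⟩
    exact hR.frequently_oscillatesAtScale hKc hK hx₀ hhalf Nat.one_div_pos_of_nat
  obtain ⟨S, -, hS, hosc⟩ :=
    exists_monotone_forall_iUnion ⟨_, R₀, isProfile_self ho hfr, rfl⟩ hstep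
  choose R hR hRS using hS
  refine ⟨⋃ m, R m, isOpen_iUnion fun m => (hR m).isOpen,
    (hR 0).base_subset.trans (subset_iUnion R 0),
    iUnion_subset fun m => (hR m).subset_base_union, fun η hη => ?_⟩
  obtain ⟨k, hk⟩ := exists_nat_one_div_lt hη
  simpa only [preimage_iUnion, hRS] using (hosc k).mono hk.le

lemma exists_isOpen_isSpongy_norm_preimage (ho : IsOpen R₀) (hfr : frontier R₀ = {1})
    (hx₀ : ‖x₀‖ = 1) (hhalf : HasDensity μ (norm ⁻¹' R₀) x₀ (1 / 2)) :
    ∃ R, IsOpen R ∧ R₀ ⊆ R ∧ R ⊆ R₀ ∪ Ioo (1 / 2) 2 ∧ IsSpongy μ (norm ⁻¹' R) := by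
  have hKc : IsCompact (norm ⁻¹' Icc (1 / 2) 2 : Set E) :=
    (isCompact_closedBall 0 2).of_isClosed_subset (isClosed_Icc.preimage continuous_norm)
      fun y hy => mem_closedBall_zero_iff.2 hy.2
  obtain ⟨R, hR, hR₀, hsub, hosc⟩ :=
    exists_oscillatesAtScale_norm_preimage ho hfr hKc (by norm_num) hx₀ hhalf
  have hfrontier : frontier R ⊆ Icc (1 / 2) 2 := by
    intro t ht
    have hcl := closure_mono hsub ht.1
    rw [closure_union] at hcl
    rcases hcl with h | h
    · have h1 : t ∈ frontier R₀ := ⟨h, fun hint => ht.2 (interior_mono hR₀ hint)⟩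
      rw [hfr, mem_singleton_iff] at h1
      norm_num [h1]
    · exact closure_Ioo (by norm_num : (1 / 2 : ℝ) ≠ 2) ▸ h
  exact ⟨R, hR, hR₀, hsub, isSpongy_of_oscillatesAtScale hosc (by norm_num [hx₀])
    ((continuous_norm.frontier_preimage_subset R).trans (preimage_mono hfrontier))⟩

variable (μ)

lemma exists_isOpen_isBounded_isSpongy :
    ∃ S : Set E, IsOpen S ∧ Bornology.IsBounded S ∧ IsSpongy μ S := by
  obtain ⟨x₀, hx₀⟩ := exists_norm_eq E zero_le_one
  have hhalf := hasDensity_norm_preimage_Iio μ (ne_zero_of_norm_ne_zero (hx₀ ▸ one_ne_zero))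
  rw [hx₀] at hhalf
  obtain ⟨R, hR, -, hsub, hspongy⟩ := exists_isOpen_isSpongy_norm_preimage isOpen_Iio
    frontier_Iio hx₀ hhalf
  refine ⟨norm ⁻¹' R, hR.preimage continuous_norm,
    (isBounded_ball (x := 0) (r := 2)).subset fun y hy => ?_, hspongy⟩
  exact mem_ball_zero_iff.2 ((hsub hy).elim (fun h => (mem_Iio.1 h).trans one_lt_two) And.right)

lemma exists_isClosed_isBounded_isSpongy :
    ∃ S : Set E, IsClosed S ∧ Bornology.IsBounded S ∧ IsSpongy μ S := by
  obtain ⟨x₀, hx₀⟩ := exists_norm_eq E zero_le_one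
  have hhalf := hasDensity_norm_preimage_Ioi μ (ne_zero_of_norm_ne_zero (hx₀ ▸ one_ne_zero))
  rw [hx₀] at hhalf
  obtain ⟨R, hR, hR₀, -, hspongy⟩ := exists_isOpen_isSpongy_norm_preimage isOpen_Ioi
    frontier_Ioi hx₀ hhalf
  have hopen : IsOpen (norm ⁻¹' R : Set E) := hR.preimage continuous_norm
  refine ⟨(norm ⁻¹' R)ᶜ, hopen.isClosed_compl,
    (isBounded_closedBall (x := 0) (r := 1)).subset fun y hy => ?_,
    hspongy.compl hopen.measurableSet⟩
  exact mem_closedBall_zero_iff.2 (not_lt.1 fun h => hy (hR₀ h))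

theorem stmt_14_general :
    (∃ S : Set E, IsOpen S ∧ Bornology.IsBounded S ∧ MeasurableSet S ∧ IsSpongy μ S) ∧
    (∃ S : Set E, IsClosed S ∧ Bornology.IsBounded S ∧ MeasurableSet S ∧ IsSpongy μ S) := by
  obtain ⟨U, hU, hUb, hUs⟩ := exists_isOpen_isBounded_isSpongy μ
  obtain ⟨C, hC, hCb, hCs⟩ := exists_isClosed_isBounded_isSpongy μ
  exact ⟨⟨U, hU, hUb, hU.measurableSet, hUs⟩, ⟨C, hC, hCb, hC.measurableSet, hCs⟩⟩

end RadialSponges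

/-- **Existence of bounded spongy subsets of `ℝⁿ`.** For every `n ≥ 1` there is a bounded
spongy subset of `ℝⁿ` (with the Euclidean metric and Lebesgue measure); moreover it can be
taken to be open, and it can be taken to be closed. -/
theorem stmt_14 (n : ℕ) (hn : 1 ≤ n) :
    (∃ S : Set (EuclideanSpace ℝ (Fin n)), IsOpen S ∧ Bornology.IsBounded S ∧
      MeasurableSet S ∧ IsSpongy volume S) ∧
    (∃ S : Set (EuclideanSpace ℝ (Fin n)), IsClosed S ∧ Bornology.IsBounded S ∧
      MeasurableSet S ∧ IsSpongy volume S) := by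
  have : Nonempty (Fin n) := ⟨⟨0, hn⟩⟩
  exact stmt_14_general volume
end
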